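/- Let S be a positive signature, 𝕂 a field of characteristic zero, and f', f'' reduced S-forests. Then in the algebra N(S) one has H_{f'} · H_{f''} = H_{f' △ f''}. -/

import Mathlib

open scoped BigOperators

/-- An `S`-term over a signature given by a type `S` of generators with arity map `ar`. -/
inductive STerm (S : Type) (ar : S → ℕ) : Type
  | leaf : STerm S ar
  | node (g : S) (c : Fin (ar g) → STerm S ar) : STerm S ar

namespace STerm

variable {S : Type} {ar : S → ℕ}

/-- The arity of a term: its number of leaves. -/
def arity : STerm S ar → ℕ
  | leaf => 1
  | node _ c => ∑ i, (c i).arity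

/-- The degree of a term: its number of internal nodes. -/
def degree : STerm S ar → ℕ
  | leaf => 0
  | node _ c => 1 + ∑ i, (c i).degree

/-- The word of decorations of internal nodes along left-to-right preorder traversal. -/
def decs : STerm S ar → List S
  | leaf => []
  | node g c => g :: (List.ofFn fun i => (c i).decs).flatten

/-- Grafting `t⟨l⟩`: the `i`-th leaf (left-to-right) is replaced by the `i`-th entry of `l`. -/
def graftList : STerm S ar → List (STerm S ar) → STerm S ar
  | leaf, l => l.headD leaf
  | node g c, l =>
      node g fun i =>
        (c i).graftList
          ((l.drop (∑ j : Fin (ar g), if (j : ℕ) < (i : ℕ) then (c j).arity else 0)).take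
            (c i).arity)

/-- Grafting a term at the rightmost leaf. -/
def graftRight : STerm S ar → STerm S ar → STerm S ar
  | leaf, s => s
  | node g c, s => node g fun i => if (i : ℕ) = ar g - 1 then (c i).graftRight s else c i

/-- Grafting a term at the leftmost (first) leaf, i.e. `∘₁`. -/
def graftFirst : STerm S ar → STerm S ar → STerm S ar
  | leaf, s => s
  | node g c, s => node g fun i => if (i : ℕ) = 0 then (c i).graftFirst s else c i

/-- Preorder traversal word: `none` for leaves, `some g` for an internal node decorated by `g`. -/
def preo : STerm S ar → List (Option S)
  | leaf => [none]
  | node g c => some g :: (List.ofFn fun i => (c i).preo).flatten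

/-- The number of extremal leaves of a term: leaves which come after every internal
node in the preorder traversal. -/
def extremalCount (t : STerm S ar) : ℕ :=
  (t.preo.reverse.takeWhile fun o => o.isNone).length

/-- The list of edges `(i, j, i')` (`i'` is the `j`-th child of `i`, `j` being 1-based) between
internal nodes, internal nodes being numbered from `0` in preorder. -/
def edges : STerm S ar → List (ℕ × ℕ × ℕ)
  | leaf => []
  | node g c =>
      (List.ofFn fun i : Fin (ar g) =>
        (match c i with
          | leaf => ([] : List (ℕ × ℕ × ℕ))
          | node _ _ =>
            [(0, (i : ℕ) + 1,
               1 + ∑ j : Fin (ar g), if (j : ℕ) < (i : ℕ) then (c j).degree else 0)]) ++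
          (c i).edges.map fun e =>
            (e.1 + (1 + ∑ j : Fin (ar g), if (j : ℕ) < (i : ℕ) then (c j).degree else 0), e.2.1,
              e.2.2 + (1 + ∑ j : Fin (ar g), if (j : ℕ) < (i : ℕ) then (c j).degree else 0))).flatten

/-- The easterly wind move inside a term: a subterm rooted at an internal node which has an
immediate left sibling is detached (replaced by a leaf) and grafted onto the rightmost leaf of
the subtree rooted at this left sibling. -/
inductive TermMove : STerm S ar → STerm S ar → Prop
  | here (g : S) (c : Fin (ar g) → STerm S ar) (j j' : Fin (ar g))
      (hj : (j' : ℕ) = (j : ℕ) + 1) (hne : c j' ≠ leaf) :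
      TermMove (node g c)
        (node g (Function.update (Function.update c j ((c j).graftRight (c j'))) j' leaf))
  | child (g : S) (c : Fin (ar g) → STerm S ar) (i : Fin (ar g)) (t' : STerm S ar) :
      TermMove (c i) t' → TermMove (node g c) (node g (Function.update c i t'))

end STerm
section Forest

variable {S : Type} {ar : S → ℕ}

/-- A forest is reduced when none of its trees is a leaf. -/
def IsReducedF (f : List (STerm S ar)) : Prop := ∀ t ∈ f, t ≠ STerm.leaf

/-- The easterly wind move on forests: either the root of a tree having an immediate left
sibling tree is detached and grafted onto the rightmost leaf of this left sibling, or a move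
happens inside one of the trees. -/
inductive ForestMove : List (STerm S ar) → List (STerm S ar) → Prop
  | root (pre : List (STerm S ar)) (t t' : STerm S ar) (post : List (STerm S ar)) :
      t' ≠ STerm.leaf → ForestMove (pre ++ t :: t' :: post) (pre ++ t.graftRight t' :: post)
  | tree (pre : List (STerm S ar)) (t t' : STerm S ar) (post : List (STerm S ar)) :
      STerm.TermMove t t' → ForestMove (pre ++ t :: post) (pre ++ t' :: post)

/-- The relation `≼`: reflexive and transitive closure of the easterly wind move. -/
def EWLe (f f' : List (STerm S ar)) : Prop := Relation.ReflTransGen ForestMove f f'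

/-- Decoration word of a forest. -/
def forestDecs (f : List (STerm S ar)) : List S := (f.map STerm.decs).flatten

/-- Degree (number of internal nodes) of a forest. -/
def forestDeg (f : List (STerm S ar)) : ℕ := (f.map STerm.degree).sum

/-- Preorder indices (from 0) of the roots of the trees of a forest. -/
def rootIdxs : List (STerm S ar) → List ℕ
  | [] => []
  | t :: r => 0 :: (rootIdxs r).map (· + t.degree)

/-- Edges between internal nodes of a forest, numbered in preorder from 0. -/
def forestEdges : List (STerm S ar) → List (ℕ × ℕ × ℕ)
  | [] => []
  | t :: r => t.edges ++ (forestEdges r).map fun e => (e.1 + t.degree, e.2.1, e.2.2 + t.degree)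

/-- Grafting the terms of `l` onto the successive extremal leaves of `t`. -/
def underSub (t : STerm S ar) (l : List (STerm S ar)) : STerm S ar :=
  t.graftList (List.ofFn (n := t.arity) fun p =>
    if (p : ℕ) < t.arity - t.extremalCount then STerm.leaf
    else l.getD ((p : ℕ) - (t.arity - t.extremalCount)) STerm.leaf)

/-- The under product `f' △ f''` of two forests. -/
def underP (f' f'' : List (STerm S ar)) : List (STerm S ar) :=
  match f'.getLast? with
  | none => f''
  | some t => f'.dropLast ++ underSub t (f''.take t.extremalCount) :: f''.drop t.extremalCount

/-- The term `ι g` of degree 1 whose root is decorated by `g`. -/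
def iotaT (g : S) : STerm S ar := STerm.node g fun _ => STerm.leaf

/-- The minimal forest of the interval `W(w)`. -/
def fmin (w : List S) : List (STerm S ar) := w.map iotaT

/-- The maximal forest of the interval `W(w)`: `ι g₁ ∘₁ ι g₂ ∘₁ ⋯ ∘₁ ι g_ℓ`. -/
def fmax : List S → List (STerm S ar)
  | [] => []
  | g :: gs => [(gs.map iotaT).foldl STerm.graftFirst (iotaT g)]

end Forest
section Alphabet

variable {S : Type} {ar : S → ℕ}

/-- An `S`-forest-like alphabet: a type endowed with a root relation, decoration relations,
and edge relations. -/
structure ForestAlphabet (S : Type) (A : Type) where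
  Root : A → Prop
  Dec : S → A → Prop
  Edge : ℕ → A → A → Prop

/-- `f`-compatibility `w ⊩^A f` of a word `w` over a forest-like alphabet. -/
def ForestAlphabet.Compat {A : Type} (Al : ForestAlphabet S A) (w : List A)
    (f : List (STerm S ar)) : Prop :=
  w.length = forestDeg f ∧
  (∀ (i : ℕ) (hi : i < w.length), i ∈ rootIdxs f → Al.Root (w.get ⟨i, hi⟩)) ∧
  (∀ (i : ℕ) (hi : i < w.length) (hd : i < (forestDecs f).length),
      Al.Dec ((forestDecs f).get ⟨i, hd⟩) (w.get ⟨i, hi⟩)) ∧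
  (∀ p j q, (p, j, q) ∈ forestEdges f → ∀ (hp : p < w.length) (hq : q < w.length),
      Al.Edge j (w.get ⟨p, hp⟩) (w.get ⟨q, hq⟩))

/-- The disjoint sum of two forest-like alphabets. -/
def ForestAlphabet.dsum {A B : Type} (Al : ForestAlphabet S A) (Bl : ForestAlphabet S B) :
    ForestAlphabet S (A ⊕ B) where
  Root := Sum.elim Al.Root Bl.Root
  Dec g := Sum.elim (Al.Dec g) (Bl.Dec g)
  Edge j x y :=
    match x, y with
    | Sum.inl a, Sum.inl a' => Al.Edge j a a'
    | Sum.inr b, Sum.inr b' => Bl.Edge j b b'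
    | Sum.inl _, Sum.inr b => Bl.Root b
    | Sum.inr _, Sum.inl _ => False

/-- The alphabet `𝔸_S` with letters `a_{g,u}`, `g ∈ S`, `u ∈ ℕ*`. -/
def ASAlphabet (S : Type) : ForestAlphabet S (S × List ℕ) where
  Root a := ∃ ℓ, a.2 = List.replicate ℓ 0
  Dec g a := a.1 = g
  Edge j a a' := ∃ ℓ, a'.2 = a.2 ++ j :: List.replicate ℓ 0

/-- The alphabet `A_ℕ` with letters `a_i`, `i ∈ ℕ`, where every letter is a root, every letter
has every decoration, and `a_i →_j a_{i'}` iff `i < i'`. -/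
def ANAlphabet (S : Type) : ForestAlphabet S ℕ where
  Root _ := True
  Dec _ _ := True
  Edge _ i i' := i < i'

/-- The packing of a word of natural numbers. -/
def pck (w : List ℕ) : List ℕ :=
  w.map fun m => ((w.filter (· ≤ m)).dedup).length

end Alphabet
section Algebra

open scoped TensorProduct

variable {S : Type} {ar : S → ℕ}

/-- Reduced `S`-terms. -/
abbrev RTerm (S : Type) (ar : S → ℕ) := {t : STerm S ar // t ≠ STerm.leaf}

/-- The map `rd` keeping the non-leaf entries of a sequence of terms. -/
def rdF : List (STerm S ar) → List (RTerm S ar)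
  | [] => []
  | STerm.leaf :: r => rdF r
  | STerm.node g c :: r => ⟨STerm.node g c, fun h => nomatch h⟩ :: rdF r

/-- The natural Hopf algebra `N(S)` as a module: the monoid algebra of the free monoid on the
set of reduced `S`-terms. -/
abbrev NAlg (𝕂 : Type) [CommSemiring 𝕂] (S : Type) (ar : S → ℕ) :=
  MonoidAlgebra 𝕂 (FreeMonoid (RTerm S ar))

/-- The basis element `E_f` of `N(S)` indexed by a reduced forest `f`. -/
noncomputable def EBasis (𝕂 : Type) [CommSemiring 𝕂] {S : Type} {ar : S → ℕ}
    (f : List (RTerm S ar)) : NAlg 𝕂 S ar :=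
  MonoidAlgebra.of 𝕂 (FreeMonoid (RTerm S ar)) (FreeMonoid.ofList f)

/-- The coproduct `Δ` of `N(S)`, defined linearly on the basis by
`Δ E_f = Σ E_{rd(s₁…s_k)} ⊗ E_{rd(u₁…u_k)}`, the sum ranging over all factorizations
`t_m = s_m⟨ū_m⟩` of the entries of `f`. -/
noncomputable def DeltaN (𝕂 : Type) [CommSemiring 𝕂] (S : Type) (ar : S → ℕ) :
    NAlg 𝕂 S ar →ₗ[𝕂] (NAlg 𝕂 S ar) ⊗[𝕂] (NAlg 𝕂 S ar) :=
  (Finsupp.lift ((NAlg 𝕂 S ar) ⊗[𝕂] (NAlg 𝕂 S ar)) 𝕂 (FreeMonoid (RTerm S ar)) fun m =>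
    ∑ᶠ c ∈ {c : List (STerm S ar × List (STerm S ar)) |
        List.Forall₂ (fun p t => p.2.length = p.1.arity ∧ p.1.graftList p.2 = t.val) c
          (FreeMonoid.toList m)},
      (EBasis 𝕂 (rdF (c.map Prod.fst))) ⊗ₜ[𝕂] (EBasis 𝕂 (rdF (c.flatMap Prod.snd)))) ∘ₗ
    (MonoidAlgebra.coeffLinearEquiv 𝕂).toLinearMap

end Algebra

namespace EW

open Relation

variable {S : Type} {ar : S → ℕ}

/-- Slot lists of length `n`: sequences of `n` terms. -/
inductive SL (S : Type) (ar : S → ℕ) : ℕ → Type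
  | nil : SL S ar 0
  | leaf {n : ℕ} (r : SL S ar n) : SL S ar (n + 1)
  | node {n : ℕ} (g : S) (c : SL S ar (ar g)) (r : SL S ar n) : SL S ar (n + 1)

/-- Reduced terms. -/
abbrev Tree (S : Type) (ar : S → ℕ) := Σ g : S, SL S ar (ar g)

theorem SL.eq_nil (x : SL S ar 0) : x = SL.nil := by cases x; rfl

/-- number of nodes -/
def dg : {n : ℕ} → SL S ar n → ℕ
  | _, .nil => 0
  | _, .leaf r => dg r
  | _, .node _ c r => dg c + dg r + 1

/-- word of decorations -/
def dc : {n : ℕ} → SL S ar n → List S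
  | _, .nil => []
  | _, .leaf r => dc r
  | _, .node g c r => g :: (dc c ++ dc r)

/-- graft at the rightmost leaf -/
def gr : {n : ℕ} → SL S ar n → (h : S) → SL S ar (ar h) → SL S ar n
  | _, .nil, _, _ => .nil
  | _, .leaf (n := 0) r, h, d => .node h d r
  | _, .leaf (n := _ + 1) r, h, d => .leaf (gr r h d)
  | _, .node (n := 0) g c r, h, d => .node g (gr c h d) r
  | _, .node (n := _ + 1) g c r, h, d => .node g c (gr r h d)

/-- all-leaves -/
def lvs : (n : ℕ) → SL S ar n
  | 0 => .nil
  | n + 1 => .leaf (lvs n)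

/-- slot moves -/
inductive SM : {n : ℕ} → SL S ar n → SL S ar n → Prop
  | child {n : ℕ} {g : S} {c c' : SL S ar (ar g)} {r : SL S ar n} :
      SM c c' → SM (.node g c r) (.node g c' r)
  | nextL {n : ℕ} {r r' : SL S ar n} : SM r r' → SM (.leaf r) (.leaf r')
  | nextN {n : ℕ} {g : S} {c : SL S ar (ar g)} {r r' : SL S ar n} :
      SM r r' → SM (.node g c r) (.node g c r')
  | swap {n : ℕ} {g : S} {c : SL S ar (ar g)} {r : SL S ar n} :
      SM (.leaf (.node g c r)) (.node g c (.leaf r))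
  | graft {n : ℕ} {g h : S} {c : SL S ar (ar g)} {d : SL S ar (ar h)} {r : SL S ar n} :
      SM (.node g c (.node h d r)) (.node g (gr c h d) (.leaf r))

/-- forest moves -/
inductive FM : List (Tree S ar) → List (Tree S ar) → Prop
  | child {g : S} {c c' : SL S ar (ar g)} {r : List (Tree S ar)} :
      SM c c' → FM (⟨g, c⟩ :: r) (⟨g, c'⟩ :: r)
  | next {t : Tree S ar} {r r' : List (Tree S ar)} : FM r r' → FM (t :: r) (t :: r')
  | graft {g h : S} {c : SL S ar (ar g)} {d : SL S ar (ar h)} {r : List (Tree S ar)} :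
      FM (⟨g, c⟩ :: ⟨h, d⟩ :: r) (⟨g, gr c h d⟩ :: r)

/-- first `k` nodes -/
def L : (k : ℕ) → {n : ℕ} → SL S ar n → SL S ar n
  | _, _, .nil => .nil
  | k, _, .leaf r => .leaf (L k r)
  | 0, _, .node _ _ r => .leaf (L 0 r)
  | k + 1, _, .node g c r => .node g (L k c) (L (k - dg c) r)

/-- remaining nodes -/
def R : (k : ℕ) → {n : ℕ} → SL S ar n → List (Tree S ar)
  | _, _, .nil => []
  | k, _, .leaf r => R k r
  | 0, _, .node g c r => ⟨g, c⟩ :: R 0 r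
  | k + 1, _, .node _ c r => R k c ++ R (k - dg c) r

/-- forest version of `L` -/
def LF : ℕ → List (Tree S ar) → List (Tree S ar)
  | _, [] => []
  | 0, _ :: _ => []
  | k + 1, ⟨g, c⟩ :: r => ⟨g, L k c⟩ :: LF (k - dg c) r

/-- forest version of `R` -/
def RF : ℕ → List (Tree S ar) → List (Tree S ar)
  | _, [] => []
  | 0, t :: r => t :: r
  | k + 1, ⟨_, c⟩ :: r => R k c ++ RF (k - dg c) r

/-- forest degree -/
def dgF : List (Tree S ar) → ℕ
  | [] => 0
  | t :: r => dg t.2 + dgF r + 1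

/-- forest decorations -/
def dcF : List (Tree S ar) → List S
  | [] => []
  | t :: r => t.1 :: (dc t.2 ++ dcF r)

section basic
attribute [local simp] dg dc gr lvs L R LF RF dgF dcF

theorem RF_zero (f : List (Tree S ar)) : RF 0 f = f := by cases f <;> simp
theorem LF_zero (f : List (Tree S ar)) : LF 0 f = [] := by cases f <;> simp

theorem L_zero {n : ℕ} (x : SL S ar n) : L 0 x = lvs n := by
  induction x with
  | nil => simp
  | leaf r ih => simp [ih]
  | node g c r ihc ihr => simp [ihr]

theorem dg_lvs (n : ℕ) : dg (lvs n : SL S ar n) = 0 := by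
  induction n with
  | zero => rfl
  | succ n ih => simpa using ih

theorem eq_lvs_of_dg {n : ℕ} (x : SL S ar n) (h : dg x = 0) : x = lvs n := by
  induction x with
  | nil => simp
  | leaf r ih => simp at h; simp [ih h]
  | node g c r ihc ihr => simp at h

theorem eq_lvs_of_R {n : ℕ} (x : SL S ar n) (h : R 0 x = []) : x = lvs n := by
  induction x with
  | nil => simp
  | leaf r ih => simp at h; simp [ih h]
  | node g c r ihc ihr => simp at h

theorem R_lvs (n k : ℕ) : R k (lvs n : SL S ar n) = [] := by
  induction n with
  | zero => simp
  | succ n ih => simpa using ih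

theorem LR_ge {n : ℕ} (x : SL S ar n) : ∀ k, dg x ≤ k → L k x = x ∧ R k x = [] := by
  induction x with
  | nil => simp
  | leaf r ih => intro k h; simp at h; simp [ih k h]
  | node g c r ihc ihr =>
    intro k h
    simp at h
    obtain _ | k := k
    · omega
    simp [ihc k (by omega), ihr (k - dg c) (by omega)]

theorem LRF_ge (f : List (Tree S ar)) : ∀ k, dgF f ≤ k → LF k f = f ∧ RF k f = [] := by
  induction f with
  | nil => simp
  | cons t r ih =>
    intro k h
    obtain ⟨g, c⟩ := t
    simp at h
    obtain _ | k := k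
    · omega
    simp [LR_ge c k (by omega), ih (k - dg c) (by omega)]


theorem dg_gr (hpos : ∀ g : S, 0 < ar g) {n : ℕ} (x : SL S ar n) (hn : n ≠ 0) (h : S) (d : SL S ar (ar h)) :
    dg (gr x h d) = dg x + dg d + 1 := by
  induction x with
  | nil => simp at hn
  | @leaf n r ih =>
    cases n with
    | zero => simp; omega
    | succ n => simp [ih]
  | @node n g c r ihc ihr =>
    cases n with
    | zero => simp [ihc (hpos g).ne']; omega
    | succ n => simp [ihr]; omega

theorem dc_gr (hpos : ∀ g : S, 0 < ar g) {n : ℕ} (x : SL S ar n) (hn : n ≠ 0) (h : S) (d : SL S ar (ar h)) :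
    dc (gr x h d) = dc x ++ h :: dc d := by
  induction x with
  | nil => simp at hn
  | @leaf n r ih =>
    cases n with
    | zero => cases r; simp
    | succ n => simp [ih]
  | @node n g c r ihc ihr =>
    cases n with
    | zero => cases r; simp [ihc (hpos g).ne']
    | succ n => simp [ihr]

theorem SM_dg (hpos : ∀ g : S, 0 < ar g) {n : ℕ} {x y : SL S ar n} (h : SM x y) : dg x = dg y := by
  induction h with
  | child _ ih => simp [ih]
  | nextL _ ih => simp [ih]
  | nextN _ ih => simp [ih]
  | swap => simp
  | @graft n g h c d r => simp [dg_gr hpos c (hpos g).ne']; omega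

theorem SM_dc (hpos : ∀ g : S, 0 < ar g) {n : ℕ} {x y : SL S ar n} (h : SM x y) : dc x = dc y := by
  induction h with
  | child _ ih => simp [ih]
  | nextL _ ih => simp [ih]
  | nextN _ ih => simp [ih]
  | swap => simp
  | @graft n g h c d r => simp [dc_gr hpos c (hpos g).ne']

theorem FM_dg (hpos : ∀ g : S, 0 < ar g) {x y : List (Tree S ar)} (h : FM x y) : dgF x = dgF y := by
  induction h with
  | child h => simp [SM_dg hpos h]
  | next _ ih => simp [ih]
  | @graft g h c d r => simp [dg_gr hpos c (hpos g).ne']; omega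

theorem FM_dc (hpos : ∀ g : S, 0 < ar g) {x y : List (Tree S ar)} (h : FM x y) : dcF x = dcF y := by
  induction h with
  | child h => simp [SM_dc hpos h]
  | next _ ih => simp [ih]
  | @graft g h c d r => simp [dc_gr hpos c (hpos g).ne']

theorem L_gr_le {n : ℕ} (x : SL S ar n) (h : S) (d : SL S ar (ar h)) :
    ∀ k, k ≤ dg x → L k (gr x h d) = L k x := by
  induction x with
  | nil => simp
  | @leaf n r ih =>
    intro k hk
    cases n with
    | zero => cases r; simp at hk; subst hk; simp
    | succ n => simp at hk; simp [ih k hk]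
  | @node n g c r ihc ihr =>
    intro k hk
    simp at hk
    cases n with
    | zero =>
      cases r
      cases k with
      | zero => simp
      | succ k => simp at hk; simp [ihc k hk]
    | succ n =>
      cases k with
      | zero => simp [ihr 0]
      | succ k => simp [ihr (k - dg c) (by omega)]

theorem LR_gr_gt (hpos : ∀ g : S, 0 < ar g) {n : ℕ} (x : SL S ar n) (hn : n ≠ 0) (h : S) (d : SL S ar (ar h)) (k : ℕ) :
    L (dg x + 1 + k) (gr x h d) = gr x h (L k d) ∧ R (dg x + 1 + k) (gr x h d) = R k d := by
  induction x with
  | nil => simp at hn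
  | @leaf n r ih =>
    cases n with
    | zero =>
      cases r
      rw [show dg (SL.leaf SL.nil : SL S ar 1) + 1 + k = k + 1 by simp; omega]
      simp
    | succ n => simpa using ih
  | @node n g c r ihc ihr =>
    cases n with
    | zero =>
      cases r
      rw [show dg (SL.node g c SL.nil : SL S ar 1) + 1 + k = (dg c + 1 + k) + 1 by simp; omega]
      simp [ihc (hpos g).ne']
    | succ n =>
      rw [show dg (SL.node g c r) + 1 + k = (dg c + (dg r + 1 + k)) + 1 by simp; omega]
      have := ihr (by simp)
      simp [this, LR_ge c (dg c + (dg r + 1 + k)) (by omega)]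

end basic

abbrev SMs {n : ℕ} (x y : SL S ar n) : Prop := ReflTransGen SM x y
abbrev FMs (x y : List (Tree S ar)) : Prop := ReflTransGen FM x y

theorem SMs.child {n : ℕ} {g : S} {c c' : SL S ar (ar g)} {r : SL S ar n} (h : SMs c c') :
    SMs (.node g c r) (.node g c' r) := ReflTransGen.lift (fun c => SL.node g c r) (fun _ _ => SM.child) _ _ h
theorem SMs.nextN {n : ℕ} {g : S} {c : SL S ar (ar g)} {r r' : SL S ar n} (h : SMs r r') :
    SMs (.node g c r) (.node g c r') := ReflTransGen.lift (fun r => SL.node g c r) (fun _ _ => SM.nextN) _ _ h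
theorem SMs.nextL {n : ℕ} {r r' : SL S ar n} (h : SMs r r') :
    SMs (.leaf r) (.leaf r') := ReflTransGen.lift (fun r => SL.leaf r) (fun _ _ => SM.nextL) _ _ h
theorem FMs.child {g : S} {c c' : SL S ar (ar g)} {r : List (Tree S ar)} (h : SMs c c') :
    FMs (⟨g, c⟩ :: r) (⟨g, c'⟩ :: r) :=
  ReflTransGen.lift (fun c => (⟨g, c⟩ :: r : List (Tree S ar))) (fun _ _ => FM.child) _ _ h
theorem FMs.next {t : Tree S ar} {r r' : List (Tree S ar)} (h : FMs r r') :
    FMs (t :: r) (t :: r') := ReflTransGen.lift (fun r => t :: r) (fun _ _ => FM.next) _ _ h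
theorem FMs.appL {f r r' : List (Tree S ar)} (h : FMs r r') : FMs (f ++ r) (f ++ r') := by
  induction f with
  | nil => exact h
  | cons t f ih => exact FMs.next ih
theorem FM.appR {f r r' : List (Tree S ar)} (h : FM r r') : FM (r ++ f) (r' ++ f) := by
  induction h with
  | child h => exact FM.child h
  | next _ ih => exact FM.next ih
  | graft => exact FM.graft
theorem FMs.appR {f r r' : List (Tree S ar)} (h : FMs r r') : FMs (r ++ f) (r' ++ f) :=
  ReflTransGen.lift (fun r => r ++ f) (fun _ _ => FM.appR) _ _ h

end EW

namespace EW

open Relation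

variable {S : Type} {ar : S → ℕ}

section mono
attribute [local simp] dg dc gr lvs L R LF RF dgF dcF

theorem R_gr_le (hpos : ∀ g : S, 0 < ar g) {n : ℕ} (x : SL S ar n) (hn : n ≠ 0) (h : S)
    (d : SL S ar (ar h)) (f : List (Tree S ar)) :
    ∀ k, k ≤ dg x → FMs (R k x ++ ⟨h, d⟩ :: f) (R k (gr x h d) ++ f) := by
  induction x with
  | nil => simp at hn
  | @leaf n r ih =>
    intro k hk
    cases n with
    | zero => cases r; simp at hk; subst hk; simp; exact .refl
    | succ n => simp at hk; simpa using ih (by simp) k hk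
  | @node n g c r ihc ihr =>
    intro k hk
    simp at hk
    cases n with
    | zero =>
      cases r
      cases k with
      | zero => simp; exact .single .graft
      | succ k => simp at hk; simpa using ihc (hpos g).ne' k hk
    | succ n =>
      cases k with
      | zero => simpa using FMs.next (ihr (by simp) 0 (by simp))
      | succ k => simpa using FMs.appL (ihr (by simp) (k - dg c) (by omega))

theorem SM_LR (hpos : ∀ g : S, 0 < ar g) {n : ℕ} {x y : SL S ar n} (h : SM x y) :
    ∀ k, SMs (L k x) (L k y) ∧ FMs (R k x) (R k y) := by
  induction h with
  | child h ih =>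
    intro k
    cases k with
    | zero => simp; exact ⟨.refl, .single (.child h)⟩
    | succ k =>
      simp [SM_dg hpos h]
      exact ⟨SMs.child (ih k).1, FMs.appR (ih k).2⟩
  | nextL _ ih =>
    intro k
    simp
    exact ⟨SMs.nextL (ih k).1, (ih k).2⟩
  | @nextN n g c r r' _ ih =>
    intro k
    cases k with
    | zero => simp; exact ⟨SMs.nextL (ih 0).1, FMs.next (ih 0).2⟩
    | succ k => simp; exact ⟨SMs.nextN (ih _).1, FMs.appL (ih _).2⟩
  | swap =>
    intro k
    cases k with
    | zero => simp; exact ⟨.refl, .refl⟩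
    | succ k => simp; exact ⟨.single .swap, .refl⟩
  | @graft n g h c d r =>
    intro k
    have hg := (hpos g).ne'
    cases k with
    | zero => simp; exact ⟨.refl, .single .graft⟩
    | succ k =>
      by_cases hk : k ≤ dg c
      · have e1 : k - dg c = 0 := by omega
        have e2 : k - dg (gr c h d) = 0 := by rw [dg_gr hpos c hg]; omega
        simp [e1, e2, L_gr_le c h d k hk]
        exact ⟨.refl, R_gr_le hpos c hg h d _ k hk⟩
      · obtain ⟨m, rfl⟩ : ∃ m, k = dg c + 1 + m := ⟨k - dg c - 1, by omega⟩
        have e1 : dg c + 1 + m - dg c = m + 1 := by omega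
        have e2 : dg c + 1 + m - dg (gr c h d) = m - dg d := by rw [dg_gr hpos c hg]; omega
        simp [e1, e2, LR_gr_gt hpos c hg h d m, LR_ge c (dg c + 1 + m) (by omega)]
        exact ⟨.single .graft, .refl⟩

theorem FM_LR (hpos : ∀ g : S, 0 < ar g) {x y : List (Tree S ar)} (h : FM x y) :
    ∀ k, FMs (LF k x) (LF k y) ∧ FMs (RF k x) (RF k y) := by
  induction h with
  | child h =>
    intro k
    cases k with
    | zero => simp; exact ⟨.refl, .single (.child h)⟩
    | succ k =>
      simp [SM_dg hpos h]
      have ih := SM_LR hpos h k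
      exact ⟨FMs.child ih.1, FMs.appR ih.2⟩
  | @next t r r' h ih =>
    intro k
    cases k with
    | zero => simp; exact ⟨.refl, .single (.next h)⟩
    | succ k => obtain ⟨g, c⟩ := t; simp; exact ⟨FMs.next (ih _).1, FMs.appL (ih _).2⟩
  | @graft g h c d r =>
    intro k
    have hg := (hpos g).ne'
    cases k with
    | zero => simp; exact ⟨.refl, .single .graft⟩
    | succ k =>
      by_cases hk : k ≤ dg c
      · have e1 : k - dg c = 0 := by omega
        have e2 : k - dg (gr c h d) = 0 := by rw [dg_gr hpos c hg]; omega
        simp [e1, e2, L_gr_le c h d k hk, LF_zero, RF_zero]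
        exact ⟨.refl, R_gr_le hpos c hg h d _ k hk⟩
      · obtain ⟨m, rfl⟩ : ∃ m, k = dg c + 1 + m := ⟨k - dg c - 1, by omega⟩
        have e1 : dg c + 1 + m - dg c = m + 1 := by omega
        have e2 : dg c + 1 + m - dg (gr c h d) = m - dg d := by rw [dg_gr hpos c hg]; omega
        simp [e1, e2, LR_gr_gt hpos c hg h d m, LR_ge c (dg c + 1 + m) (by omega)]
        exact ⟨.single .graft, .refl⟩

/-- `L`, `R` are monotone. -/
theorem FMs_LR (hpos : ∀ g : S, 0 < ar g) {x y : List (Tree S ar)} (h : FMs x y) (k : ℕ) :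
    FMs (LF k x) (LF k y) ∧ FMs (RF k x) (RF k y) := by
  induction h with
  | refl => exact ⟨.refl, .refl⟩
  | tail _ h ih =>
    exact ⟨ih.1.trans (FM_LR hpos h k).1, ih.2.trans (FM_LR hpos h k).2⟩

/-! lifting of moves of `L` -/

theorem dg_L_le {n : ℕ} (x : SL S ar n) : ∀ k, dg (L k x) = min k (dg x) := by
  induction x with
  | nil => simp
  | leaf r ih => simpa using ih
  | node g c r ihc ihr =>
    intro k
    cases k with
    | zero => simp [ihr]
    | succ k => simp [ihr, ihc]; omega

theorem liftL (hpos : ∀ g : S, 0 < ar g) {n : ℕ} (x : SL S ar n) : ∀ k (a : SL S ar n), SM (L k x) a →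
    ∃ y, SM x y ∧ L k y = a ∧ R k y = R k x := by
  induction x with
  | nil => intro k a h; cases h
  | @leaf n r ih =>
    intro k a h
    simp at h
    generalize hz : L k r = z at h
    cases h with
    | nextL h =>
      subst hz
      obtain ⟨y, h1, h2, h3⟩ := ih k _ h
      exact ⟨.leaf y, .nextL h1, by simp [h2], by simp [h3]⟩
    | swap =>
      cases r with
      | leaf r => simp at hz
      | node g c r =>
        cases k with
        | zero => simp at hz
        | succ k =>
          simp at hz
          obtain ⟨rfl, hz2, hz3⟩ := hz
          obtain rfl := eq_of_heq hz2
          subst hz3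
          exact ⟨_, .swap, by simp, by simp⟩
  | @node n g c r ihc ihr =>
    intro k a h
    cases k with
    | zero =>
      rw [L_zero] at h
      exfalso
      have : ∀ (m : ℕ) (a : SL S ar m), ¬ SM (lvs m) a := by
        intro m
        induction m with
        | zero => intro a h; cases h
        | succ m ih =>
          intro a h
          simp at h
          generalize hz : (lvs m : SL S ar m) = z at h
          cases h with
          | nextL h => subst hz; exact ih _ h
          | swap => simp at hz
      exact this _ _ h
    | succ k =>
      simp at h
      generalize hz : L (k - dg c) r = z at h
      generalize hw : L k c = w at h
      cases h with
      | child h =>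
        subst hw hz
        obtain ⟨y, h1, h2, h3⟩ := ihc k _ h
        exact ⟨.node g y r, .child h1, by simp [h2, SM_dg hpos h1], by simp [h3, SM_dg hpos h1]⟩
      | nextN h =>
        subst hw hz
        obtain ⟨y, h1, h2, h3⟩ := ihr _ _ h
        exact ⟨.node g c y, .nextN h1, by simp [h2], by simp [h3]⟩
      | @graft n _ h _ d r0 =>
        cases r with
        | leaf r => simp at hz
        | node h' d' r =>
          have hk : ¬ k ≤ dg c := by
            intro hk
            rw [show k - dg c = 0 by omega] at hz
            simp at hz
          have hg := (hpos g).ne'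
          obtain ⟨m, rfl⟩ : ∃ m, k = dg c + 1 + m := ⟨k - dg c - 1, by omega⟩
          have e1 : dg c + 1 + m - dg c = m + 1 := by omega
          rw [e1] at hz
          simp at hz
          obtain ⟨rfl, hz2, hz3⟩ := hz
          obtain rfl := eq_of_heq hz2
          subst hz3
          have e2 : dg c + 1 + m - dg (gr c h' d') = m - dg d' := by rw [dg_gr hpos c hg]; omega
          rw [(LR_ge c (dg c + 1 + m) (by omega)).1] at hw
          subst hw
          refine ⟨_, .graft, ?_, ?_⟩
          · simp [e2, LR_gr_gt hpos c hg h' d' m]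
          · simp [e1, e2, LR_gr_gt hpos c hg h' d' m, LR_ge c (dg c + 1 + m) (by omega)]

theorem liftLF (hpos : ∀ g : S, 0 < ar g) (x : List (Tree S ar)) : ∀ k a, FM (LF k x) a →
    ∃ y, FM x y ∧ LF k y = a ∧ RF k y = RF k x := by
  induction x with
  | nil => intro k a h; simp at h; cases h
  | cons t r ihr =>
    obtain ⟨g, c⟩ := t
    intro k a h
    cases k with
    | zero => simp at h; cases h
    | succ k =>
      simp at h
      generalize hz : LF (k - dg c) r = z at h
      generalize hw : L k c = w at h
      cases h with
      | child h =>
        subst hw hz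
        obtain ⟨y, h1, h2, h3⟩ := liftL hpos c k _ h
        exact ⟨⟨g, y⟩ :: r, .child h1, by simp [h2, SM_dg hpos h1], by simp [h3, SM_dg hpos h1]⟩
      | next h =>
        subst hw hz
        obtain ⟨y, h1, h2, h3⟩ := ihr _ _ h
        exact ⟨⟨g, c⟩ :: y, .next h1, by simp [h2], by simp [h3]⟩
      | @graft _ h _ d r0 =>
        cases r with
        | nil => simp at hz
        | cons t r =>
          obtain ⟨h', d'⟩ := t
          have hk : ¬ k ≤ dg c := by
            intro hk
            rw [show k - dg c = 0 by omega] at hz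
            simp at hz
          have hg := (hpos g).ne'
          obtain ⟨m, rfl⟩ : ∃ m, k = dg c + 1 + m := ⟨k - dg c - 1, by omega⟩
          have e1 : dg c + 1 + m - dg c = m + 1 := by omega
          rw [e1] at hz
          simp at hz
          obtain ⟨⟨rfl, hz2⟩, hz3⟩ := hz
          obtain rfl := eq_of_heq hz2
          subst hz3
          have e2 : dg c + 1 + m - dg (gr c h' d') = m - dg d' := by rw [dg_gr hpos c hg]; omega
          rw [(LR_ge c (dg c + 1 + m) (by omega)).1] at hw
          subst hw
          refine ⟨_, .graft, ?_, ?_⟩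
          · simp [e2, LR_gr_gt hpos c hg h' d' m]
          · simp [e1, e2, LR_gr_gt hpos c hg h' d' m, LR_ge c (dg c + 1 + m) (by omega)]

theorem liftLFs (hpos : ∀ g : S, 0 < ar g) (x : List (Tree S ar)) (k : ℕ) (a : List (Tree S ar))
    (h : FMs (LF k x) a) : ∃ y, FMs x y ∧ LF k y = a ∧ RF k y = RF k x := by
  induction h with
  | refl => exact ⟨x, .refl, rfl, rfl⟩
  | tail _ h ih =>
    obtain ⟨y, h1, h2, h3⟩ := ih
    subst h2
    obtain ⟨z, g1, g2, g3⟩ := liftLF hpos y k _ h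
    exact ⟨z, h1.tail g1, g2, g3.trans h3⟩

end mono

end EW

namespace EW

open Relation

variable {S : Type} {ar : S → ℕ}

/-- graft on the rightmost leaf of the last tree -/
def grF : List (Tree S ar) → (h : S) → SL S ar (ar h) → List (Tree S ar)
  | [], _, _ => []
  | [⟨g, c⟩], h, d => [⟨g, gr c h d⟩]
  | t :: t' :: r, h, d => t :: grF (t' :: r) h d

section liftR
attribute [local simp] dg dc gr lvs L R LF RF dgF dcF grF

theorem grF_cons (t : Tree S ar) (r : List (Tree S ar)) (hr : r ≠ []) (h : S) (d : SL S ar (ar h)) :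
    grF (t :: r) h d = t :: grF r h d := by
  cases r with
  | nil => simp at hr
  | cons t' r => rfl

theorem grF_app (u v : List (Tree S ar)) (hv : v ≠ []) (h : S) (d : SL S ar (ar h)) :
    grF (u ++ v) h d = u ++ grF v h d := by
  induction u with
  | nil => rfl
  | cons t u ih => rw [List.cons_append, grF_cons _ _ (by simp [hv]), ih]; rfl

theorem SMs_dg (hpos : ∀ g : S, 0 < ar g) {n : ℕ} {x y : SL S ar n} (h : SMs x y) : dg x = dg y := by
  induction h with
  | refl => rfl
  | tail _ h ih => rw [ih, SM_dg hpos h]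

theorem FM_app_inv (u v z : List (Tree S ar)) (hm : FM (u ++ v) z) :
    (∃ u', FM u u' ∧ z = u' ++ v) ∨ (∃ v', FM v v' ∧ z = u ++ v') ∨
      (u ≠ [] ∧ ∃ h d v', v = ⟨h, d⟩ :: v' ∧ z = grF u h d ++ v') := by
  induction u generalizing z with
  | nil => right; left; exact ⟨z, hm, rfl⟩
  | cons t u ih =>
    rw [List.cons_append] at hm
    generalize hw : u ++ v = w at hm
    cases hm with
    | child hm => subst hw; left; exact ⟨_, .child hm, by simp⟩
    | next hm =>
      subst hw
      rcases ih _ hm with ⟨u', h1, rfl⟩ | ⟨v', h1, rfl⟩ | ⟨hu, h, d, v', rfl, rfl⟩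
      · left; exact ⟨_, .next h1, by simp⟩
      · right; left; exact ⟨_, h1, by simp⟩
      · right; right
        refine ⟨by simp, h, d, v', rfl, ?_⟩
        rw [grF_cons _ _ hu]; rfl
    | @graft g h c d r =>
      cases u with
      | nil =>
        simp at hw
        subst hw
        right; right
        exact ⟨by simp, h, d, r, rfl, by simp⟩
      | cons t u =>
        simp at hw
        obtain ⟨rfl, rfl⟩ := hw
        left
        exact ⟨_, .graft, by simp⟩

theorem pull {h : S} {d : SL S ar (ar h)} {n : ℕ} {f : List (Tree S ar)} (r : SL S ar (n + 1))
    (hr : R 0 r = ⟨h, d⟩ :: f) : ∃ r' : SL S ar n, SMs r (.node h d r') ∧ R 0 r' = f := by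
  induction n with
  | zero =>
    cases r with
    | leaf r => cases r; simp at hr
    | node g c r => cases r; simp at hr; obtain ⟨⟨rfl, hr⟩, rfl⟩ := hr; cases hr; exact ⟨_, .refl, rfl⟩
  | succ n ih =>
    cases r with
    | leaf r =>
      simp at hr
      obtain ⟨r', h1, h2⟩ := ih r hr
      exact ⟨.leaf r', (SMs.nextL h1).tail .swap, by simp [h2]⟩
    | node g c r => simp at hr; obtain ⟨⟨rfl, hr⟩, rfl⟩ := hr; cases hr; exact ⟨_, .refl, rfl⟩

theorem R_gr_lvs (n : ℕ) (h : S) (d : SL S ar (ar h)) : R 0 (gr (lvs (n + 1)) h d) = [⟨h, d⟩] := by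
  induction n with
  | zero => simp
  | succ n ih =>
    rw [lvs] at ih ⊢
    simpa using ih

theorem pullgr (n : ℕ) (h : S) (d : SL S ar (ar h)) :
    SMs (gr (lvs (n + 1)) h d) (.node h d (lvs n)) := by
  obtain ⟨r', h1, h2⟩ := pull _ (R_gr_lvs n h d)
  rwa [← eq_lvs_of_R r' h2]

theorem subB (hpos : ∀ g : S, 0 < ar g) {n : ℕ} (x : SL S ar n) (h : S) (d : SL S ar (ar h)) :
    ∀ k, R k x ≠ [] → ∃ y, SMs (gr x h d) y ∧ L k y = L k x ∧ R k y = grF (R k x) h d := by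
  induction x with
  | nil => simp
  | @leaf n r ih =>
    intro k hk
    cases n with
    | zero => cases r; simp at hk
    | succ n =>
      simp at hk
      obtain ⟨y, h1, h2, h3⟩ := ih k hk
      exact ⟨.leaf y, SMs.nextL h1, by simp [h2], by simp [h3]⟩
  | @node n g c r ihc ihr =>
    intro k hk
    have hg := (hpos g).ne'
    cases n with
    | zero =>
      cases r
      cases k with
      | zero => exact ⟨_, .refl, by simp, by simp⟩
      | succ k =>
        simp at hk
        obtain ⟨y, h1, h2, h3⟩ := ihc k hk
        exact ⟨.node g y .nil, SMs.child h1, by simp [h2], by simp [h3]⟩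
    | succ n =>
      cases k with
      | zero =>
        by_cases hr : R 0 r = []
        · obtain rfl := eq_lvs_of_R r hr
          refine ⟨.node g (gr c h d) (.leaf (lvs n)), (SMs.nextN (pullgr n h d)).tail .graft, ?_, ?_⟩
          · simp
          · rw [lvs] at hr; simp at hr; simp [hr]
        · obtain ⟨y, h1, h2, h3⟩ := ihr 0 hr
          refine ⟨.node g c y, SMs.nextN h1, ?_, ?_⟩
          · simp [h2]
          · simp [h3, grF_cons _ _ hr]
      | succ k =>
        by_cases hr : R (k - dg c) r = []
        · simp [hr] at hk
          have hkc : k - dg c = 0 := by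
            by_contra hh
            exact hk (LR_ge c k (by omega)).2
          rw [hkc] at hr
          obtain rfl := eq_lvs_of_R r hr
          obtain ⟨y, h1, h2, h3⟩ := ihc k hk
          refine ⟨.node g y (.leaf (lvs n)),
            ((SMs.nextN (pullgr n h d)).tail .graft).trans (SMs.child h1), ?_, ?_⟩
          · have : k - dg y = 0 := by rw [← SMs_dg hpos h1, dg_gr hpos c hg]; omega
            simp [this, h2, hkc]
          · simp [h3, R_lvs]
        · obtain ⟨y, h1, h2, h3⟩ := ihr _ hr
          refine ⟨.node g c y, SMs.nextN h1, ?_, ?_⟩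
          · simp [h2]
          · simp [h3, grF_app _ _ hr]

theorem liftR (hpos : ∀ g : S, 0 < ar g) {n : ℕ} (x : SL S ar n) : ∀ k b, FM (R k x) b →
    ∃ y, SMs x y ∧ L k y = L k x ∧ R k y = b := by
  induction x with
  | nil => intro k b h; simp at h; cases h
  | @leaf n r ih =>
    intro k b h
    simp at h
    obtain ⟨y, h1, h2, h3⟩ := ih k b h
    exact ⟨.leaf y, SMs.nextL h1, by simp [h2], by simp [h3]⟩
  | @node n g c r ihc ihr =>
    intro k b hm
    have hg := (hpos g).ne'
    cases k with
    | zero =>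
      simp at hm
      generalize hz : R 0 r = z at hm
      cases hm with
      | child hm => exact ⟨_, .single (.child hm), by simp, by simp [hz]⟩
      | next hm =>
        subst hz
        obtain ⟨y, h1, h2, h3⟩ := ihr 0 _ hm
        exact ⟨.node g c y, SMs.nextN h1, by simp [h2], by simp [h3]⟩
      | @graft _ h _ d f =>
        cases n with
        | zero => cases r; simp at hz
        | succ n =>
          obtain ⟨r', h1, h2⟩ := pull r hz
          exact ⟨.node g (gr c h d) (.leaf r'), (SMs.nextN h1).tail .graft,
            by simp [L_zero], by simp [h2]⟩
    | succ k =>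
      simp at hm
      rcases FM_app_inv _ _ _ hm with ⟨u', h1, rfl⟩ | ⟨v', h1, rfl⟩ | ⟨hu, h, d, v', hv, rfl⟩
      · obtain ⟨y, h1, h2, h3⟩ := ihc k _ h1
        exact ⟨.node g y r, SMs.child h1, by simp [h2, SMs_dg hpos h1],
          by simp [h3, SMs_dg hpos h1]⟩
      · obtain ⟨y, h1, h2, h3⟩ := ihr _ _ h1
        exact ⟨.node g c y, SMs.nextN h1, by simp [h2], by simp [h3]⟩
      · have hkc : k - dg c = 0 := by
          by_contra hh
          exact hu (LR_ge c k (by omega)).2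
        rw [hkc] at hv
        cases n with
        | zero => cases r; simp at hv
        | succ n =>
          obtain ⟨r', g1, g2⟩ := pull r hv
          obtain ⟨y, h1, h2, h3⟩ := subB hpos c h d k hu
          have : k - dg y = 0 := by rw [← SMs_dg hpos h1, dg_gr hpos c hg]; omega
          exact ⟨.node g y (.leaf r'), ((SMs.nextN g1).tail .graft).trans (SMs.child h1),
            by simp [h2, this, hkc, L_zero], by simp [h3, this, g2]⟩

theorem liftRF (hpos : ∀ g : S, 0 < ar g) (x : List (Tree S ar)) : ∀ k b, FM (RF k x) b →
    ∃ y, FMs x y ∧ LF k y = LF k x ∧ RF k y = b := by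
  induction x with
  | nil => intro k b h; simp at h; cases h
  | cons t r ihr =>
    obtain ⟨g, c⟩ := t
    intro k b hm
    have hg := (hpos g).ne'
    cases k with
    | zero =>
      rw [RF_zero] at hm
      exact ⟨b, .single hm, by simp [LF_zero], RF_zero _⟩
    | succ k =>
      simp at hm
      rcases FM_app_inv _ _ _ hm with ⟨u', h1, rfl⟩ | ⟨v', h1, rfl⟩ | ⟨hu, h, d, v', hv, rfl⟩
      · obtain ⟨y, h1, h2, h3⟩ := liftR hpos c k _ h1
        exact ⟨⟨g, y⟩ :: r, FMs.child h1, by simp [h2, SMs_dg hpos h1],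
          by simp [h3, SMs_dg hpos h1]⟩
      · obtain ⟨y, h1, h2, h3⟩ := ihr _ _ h1
        exact ⟨⟨g, c⟩ :: y, FMs.next h1, by simp [h2], by simp [h3]⟩
      · have hkc : k - dg c = 0 := by
          by_contra hh
          exact hu (LR_ge c k (by omega)).2
        rw [hkc, RF_zero] at hv
        subst hv
        obtain ⟨y, h1, h2, h3⟩ := subB hpos c h d k hu
        have : k - dg y = 0 := by rw [← SMs_dg hpos h1, dg_gr hpos c hg]; omega
        exact ⟨⟨g, y⟩ :: v', (ReflTransGen.single .graft).trans (FMs.child h1),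
            by simp [h2, this, hkc, LF_zero], by simp [h3, this, RF_zero]⟩

theorem liftRFs (hpos : ∀ g : S, 0 < ar g) (x : List (Tree S ar)) (k : ℕ) (b : List (Tree S ar))
    (h : FMs (RF k x) b) : ∃ y, FMs x y ∧ LF k y = LF k x ∧ RF k y = b := by
  induction h with
  | refl => exact ⟨x, .refl, rfl, rfl⟩
  | tail _ h ih =>
    obtain ⟨y, h1, h2, h3⟩ := ih
    subst h3
    obtain ⟨z, g1, g2, g3⟩ := liftRF hpos y k _ h
    exact ⟨z, h1.trans g1, g2.trans h2, g3⟩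

end liftR

end EW

namespace EW

open Relation

variable {S : Type} {ar : S → ℕ}

/-- moves of a slot list followed by a forest -/
inductive PM {n : ℕ} : SL S ar n × List (Tree S ar) → SL S ar n × List (Tree S ar) → Prop
  | slot {x y : SL S ar n} {f : List (Tree S ar)} : SM x y → PM (x, f) (y, f)
  | graft {x : SL S ar n} {h : S} {d : SL S ar (ar h)} {f : List (Tree S ar)} :
      n ≠ 0 → PM (x, ⟨h, d⟩ :: f) (gr x h d, f)

abbrev PMs {n : ℕ} (x y : SL S ar n × List (Tree S ar)) : Prop := ReflTransGen PM x y

/-- filling of the extremal leaves -/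
def fl : {n : ℕ} → SL S ar n → List (Tree S ar) → SL S ar n × List (Tree S ar)
  | _, .nil, f => (.nil, f)
  | _, .leaf r, [] => (.leaf r, [])
  | _, .leaf r, t :: f =>
      if dg r = 0 then (.node t.1 t.2 (fl r f).1, (fl r f).2)
      else (.leaf (fl r (t :: f)).1, (fl r (t :: f)).2)
  | _, .node g c r, f =>
      if dg r = 0 then (.node g (fl c f).1 (fl r (fl c f).2).1, (fl r (fl c f).2).2)
      else (.node g c (fl r f).1, (fl r f).2)

/-- under product -/
def und : List (Tree S ar) → List (Tree S ar) → List (Tree S ar)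
  | [], f => f
  | [⟨g, c⟩], f => ⟨g, (fl c f).1⟩ :: (fl c f).2
  | t :: t' :: r, f => t :: und (t' :: r) f

section fill
attribute [local simp] dg dc gr lvs L R LF RF dgF dcF grF fl und

theorem fl_nil {n : ℕ} (x : SL S ar n) : fl x [] = (x, []) := by
  induction x with
  | nil => simp
  | leaf r ih => simp
  | node g c r ihc ihr => simp [ihc, ihr]

theorem fl_leaf {n : ℕ} (r : SL S ar n) (hr : dg r ≠ 0) (f : List (Tree S ar)) :
    fl (.leaf r) f = (.leaf (fl r f).1, (fl r f).2) := by
  cases f with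
  | nil => simp [fl_nil]
  | cons t f => simp [hr]

theorem und_cons (t : Tree S ar) (r f : List (Tree S ar)) (hr : r ≠ []) :
    und (t :: r) f = t :: und r f := by
  cases r with
  | nil => simp at hr
  | cons t' r => rfl

theorem LR_fl {n : ℕ} (x : SL S ar n) : ∀ f, L (dg x) (fl x f).1 = x ∧
    R (dg x) (fl x f).1 ++ (fl x f).2 = f ∧ dg x ≤ dg (fl x f).1 := by
  induction x with
  | nil => simp
  | leaf r ih =>
    intro f
    by_cases hr : dg r = 0
    · cases f with
      | nil => simp [LR_ge r (dg r)]
      | cons t f =>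
        have := ih f
        rw [hr] at this
        simp [hr, this.1, this.2.1]
    · rw [fl_leaf r hr]
      simp [ih f]
  | node g c r ihc ihr =>
    intro f
    by_cases hr : dg r = 0
    · have h1 := ihc f
      have h2 := ihr (fl c f).2
      rw [hr] at h2
      have : dg c - dg (fl c f).1 = 0 := by omega
      simp [hr, this, h1.1, h2.1, h2.2.1, h1.2.1]
      omega
    · have h2 := ihr f
      have h3 := LR_ge c (dg c + dg r) (by omega)
      simp [hr, h2, h3]

theorem LRF_und (x : List (Tree S ar)) (f : List (Tree S ar)) :
    LF (dgF x) (und x f) = x ∧ RF (dgF x) (und x f) = f := by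
  induction x with
  | nil => simp [LF_zero, RF_zero]
  | cons t r ih =>
    obtain ⟨g, c⟩ := t
    by_cases hr : r = []
    · subst hr
      have h1 := LR_fl c f
      have : dg c - dg (fl c f).1 = 0 := by omega
      simp [this, h1.1, LF_zero, RF_zero, h1.2.1]
    · rw [und_cons _ _ _ hr]
      have h3 := LR_ge c (dg c + dgF r) (by omega)
      simp [h3, ih]

theorem LRF_app (x : List (Tree S ar)) (f : List (Tree S ar)) :
    LF (dgF x) (x ++ f) = x ∧ RF (dgF x) (x ++ f) = f := by
  induction x with
  | nil => simp [LF_zero, RF_zero]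
  | cons t r ih =>
    obtain ⟨g, c⟩ := t
    have h3 := LR_ge c (dg c + dgF r) (by omega)
    simp [h3, ih]

theorem PMs.slot {n : ℕ} {x y : SL S ar n} {f : List (Tree S ar)} (h : SMs x y) :
    PMs (x, f) (y, f) := ReflTransGen.lift (fun x => (x, f)) (fun _ _ => PM.slot) _ _ h

theorem PMs.nextL {n : ℕ} {p q : SL S ar n × List (Tree S ar)} (h : PMs p q) :
    PMs (SL.leaf p.1, p.2) (SL.leaf q.1, q.2) := by
  refine ReflTransGen.lift
    (fun p : SL S ar n × List (Tree S ar) => (SL.leaf p.1, p.2)) ?_ _ _ h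
  intro a b h
  cases h with
  | slot h => exact .slot (.nextL h)
  | graft h =>
    cases n with
    | zero => simp at h
    | succ n => exact PM.graft (by simp)

theorem PMs.nextN {n : ℕ} {g : S} {c : SL S ar (ar g)} {p q : SL S ar n × List (Tree S ar)}
    (h : PMs p q) : PMs (SL.node g c p.1, p.2) (SL.node g c q.1, q.2) := by
  refine ReflTransGen.lift
    (fun p : SL S ar n × List (Tree S ar) => (SL.node g c p.1, p.2)) ?_ _ _ h
  intro a b h
  cases h with
  | slot h => exact .slot (.nextN h)
  | graft h =>
    cases n with
    | zero => simp at h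
    | succ n => exact PM.graft (by simp)

theorem PMs.toFM {g : S} {p q : SL S ar (ar g) × List (Tree S ar)} (h : PMs p q) :
    FMs (⟨g, p.1⟩ :: p.2) (⟨g, q.1⟩ :: q.2) := by
  refine ReflTransGen.lift
    (fun p : SL S ar (ar g) × List (Tree S ar) => (⟨g, p.1⟩ :: p.2 : List (Tree S ar))) ?_ _ _ h
  intro a b h
  cases h with
  | slot h => exact .child h
  | graft h => exact .graft

theorem front {n : ℕ} (x : SL S ar (n + 1)) (f : List (Tree S ar)) {h : S} {d : SL S ar (ar h)}
    {F : List (Tree S ar)} (hF : R 0 x ++ f = ⟨h, d⟩ :: F) :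
    ∃ (x' : SL S ar n) (f' : List (Tree S ar)), PMs (x, f) (.node h d x', f') ∧ R 0 x' ++ f' = F ∧
      (R 0 x = [] → R 0 x' = []) := by
  by_cases hx : R 0 x = []
  · rw [hx] at hF
    simp at hF
    subst hF
    obtain rfl := eq_lvs_of_R x hx
    exact ⟨lvs n, F, (PMs.slot (pullgr n h d)).head (PM.graft (by simp)), by simp [R_lvs],
      by simp [R_lvs]⟩
  · obtain ⟨t, u, hu⟩ := List.exists_cons_of_ne_nil hx
    rw [hu] at hF
    simp at hF
    obtain ⟨rfl, rfl⟩ := hF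
    obtain ⟨x', h1, h2⟩ := pull x hu
    exact ⟨x', f, PMs.slot h1, by simp [h2], fun h => absurd h hx⟩

theorem fillZ {n : ℕ} : ∀ (x : SL S ar n) (f : List (Tree S ar)),
    PMs (x, f) (fl (lvs n) (R 0 x ++ f)) := by
  induction n with
  | zero => intro x f; cases x; simp; exact .refl
  | succ n ih =>
    intro x f
    rcases hF : R 0 x ++ f with _ | ⟨⟨h, d⟩, F⟩
    · simp at hF
      obtain ⟨h1, rfl⟩ := hF
      rw [fl_nil, ← eq_lvs_of_R x h1]
    · obtain ⟨x', f', h1, h2, -⟩ := front x f hF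
      simp [dg_lvs]
      subst h2
      exact h1.trans (PMs.nextN (ih x' f'))

theorem liftC {g : S} {p q : SL S ar (ar g) × List (Tree S ar)} (hm : PM p q)
    {n : ℕ} (r : SL S ar n) (f : List (Tree S ar)) (hF : R 0 r ++ f = p.2) :
    ∃ (r1 : SL S ar n) (f1 : List (Tree S ar)), PMs (.node g p.1 r, f) (.node g q.1 r1, f1) ∧
      R 0 r1 ++ f1 = q.2 ∧ (R 0 r = [] → R 0 r1 = []) := by
  cases hm with
  | slot hm => exact ⟨r, f, .single (.slot (.child hm)), hF, id⟩
  | @graft c h d F hg =>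
    cases n with
    | zero =>
      cases r
      simp at hF
      subst hF
      exact ⟨.nil, F, .single (PM.graft (by simp)), by simp, by simp⟩
    | succ n =>
      obtain ⟨x', f', h1, h2, h3⟩ := front r f hF
      refine ⟨.leaf x', f', (PMs.nextN h1).tail (.slot .graft), by simpa using h2, ?_⟩
      intro h
      simpa using h3 h

theorem liftCs {g : S} {p q : SL S ar (ar g) × List (Tree S ar)} (hm : PMs p q)
    {n : ℕ} (r : SL S ar n) (f : List (Tree S ar)) (hF : R 0 r ++ f = p.2) :
    ∃ (r1 : SL S ar n) (f1 : List (Tree S ar)), PMs (.node g p.1 r, f) (.node g q.1 r1, f1) ∧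
      R 0 r1 ++ f1 = q.2 ∧ (R 0 r = [] → R 0 r1 = []) := by
  induction hm with
  | refl => exact ⟨r, f, .refl, hF, id⟩
  | tail _ h ih =>
    obtain ⟨r1, f1, h1, h2, h3⟩ := ih
    obtain ⟨r2, f2, g1, g2, g3⟩ := liftC h r1 f1 h2
    exact ⟨r2, f2, h1.trans g1, g2, fun h => g3 (h3 h)⟩

theorem fillS {n : ℕ} (x : SL S ar n) : ∀ (f : List (Tree S ar)) (k : ℕ), k ≤ dg x →
    PMs (x, f) (fl (L k x) (R k x ++ f)) := by
  induction x with
  | nil => intro f k h; simp; exact .refl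
  | leaf r ih =>
    intro f k hk
    cases k with
    | zero => rw [L_zero]; exact fillZ _ _
    | succ k =>
      simp at hk
      simp
      rw [fl_leaf _ (by rw [dg_L_le]; omega)]
      exact PMs.nextL (ih f (k + 1) hk)
  | @node n g c r ihc ihr =>
    intro f k hk
    cases k with
    | zero => rw [L_zero]; exact fillZ _ _
    | succ k =>
      simp at hk
      by_cases hkc : k - dg c = 0
      · obtain ⟨r1, f1, h1, h2, -⟩ := liftCs (ihc (R 0 r ++ f) k (by omega)) r f rfl
        simp [hkc, L_zero, dg_lvs]
        rw [← h2]
        exact h1.trans (PMs.nextN (fillZ r1 f1))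
      · have h3 := LR_ge c k (by omega)
        have h4 : dg (L (k - dg c) r) ≠ 0 := by rw [dg_L_le]; omega
        simp [h3, h4]
        exact PMs.nextN (ihr f (k - dg c) (by omega))

theorem appZ {n : ℕ} (x : SL S ar n) : ∀ (f : List (Tree S ar)),
    PMs (lvs n, R 0 x ++ f) (x, f) := by
  induction x with
  | nil => intro f; simp; exact .refl
  | leaf r ih => intro f; simp; exact PMs.nextL (ih f)
  | @node n g c r ihc ihr =>
    intro f
    have h1 : PMs (lvs (n + 1), ⟨g, c⟩ :: (R 0 r ++ f)) (SL.node g c (lvs n), R 0 r ++ f) :=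
      (PMs.slot (pullgr n g c)).head (PM.graft (by simp))
    exact h1.trans (PMs.nextN (ihr f))

theorem appS {n : ℕ} (x : SL S ar n) : ∀ (f : List (Tree S ar)) (k : ℕ),
    PMs (L k x, R k x ++ f) (x, f) := by
  induction x with
  | nil => intro f k; simp; exact .refl
  | leaf r ih => intro f k; simp; exact PMs.nextL (ih f k)
  | @node n g c r ihc ihr =>
    intro f k
    cases k with
    | zero => rw [L_zero]; exact appZ _ _
    | succ k =>
      by_cases hkc : k - dg c = 0
      · obtain ⟨r1, f1, h1, h2, h3⟩ := liftCs (ihc (R 0 r ++ f) k) (lvs n) (R k c ++ (R 0 r ++ f))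
          (by simp [R_lvs])
        have h4 := h3 (R_lvs _ _)
        rw [h4] at h2
        simp at h2
        subst h2
        rw [eq_lvs_of_R r1 h4] at h1
        simp [hkc, L_zero]
        exact h1.trans (PMs.nextN (appZ r f))
      · have h3 := LR_ge c k (by omega)
        simp [h3]
        exact PMs.nextN (ihr f (k - dg c))

theorem app_le (x : List (Tree S ar)) : ∀ k, FMs (LF k x ++ RF k x) x := by
  induction x with
  | nil => intro k; simp; exact .refl
  | cons t r ih =>
    obtain ⟨g, c⟩ := t
    intro k
    cases k with
    | zero => simp; exact .refl
    | succ k =>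
      by_cases hkc : k - dg c = 0
      · simp [hkc, LF_zero, RF_zero]
        exact (appS c r k).toFM
      · have h3 := LR_ge c k (by omega)
        simp [h3]
        exact FMs.next (ih _)

theorem le_und (x : List (Tree S ar)) : ∀ k, k ≤ dgF x → FMs x (und (LF k x) (RF k x)) := by
  induction x with
  | nil => intro k h; simp; exact .refl
  | cons t r ih =>
    obtain ⟨g, c⟩ := t
    intro k hk
    cases k with
    | zero => simp; exact .refl
    | succ k =>
      simp at hk
      by_cases hkc : k - dg c = 0
      · simp [hkc, LF_zero, RF_zero]
        exact (fillS c r k (by omega)).toFM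
      · have h3 := LR_ge c k (by omega)
        have h4 : LF (k - dg c) r ≠ [] := by
          cases r with
          | nil => simp at hk; omega
          | cons t r =>
            obtain ⟨m, hm⟩ := Nat.exists_eq_succ_of_ne_zero hkc
            simp [hm]
        rw [LF, RF, und_cons _ _ _ h4]
        simp [h3]
        exact FMs.next (ih _ (by omega))

end fill

theorem FMs_dg (hpos : ∀ g : S, 0 < ar g) {x y : List (Tree S ar)} (h : FMs x y) : dgF x = dgF y := by
  induction h with
  | refl => rfl
  | tail _ h ih => rw [ih, FM_dg hpos h]

theorem FMs_dc (hpos : ∀ g : S, 0 < ar g) {x y : List (Tree S ar)} (h : FMs x y) : dcF x = dcF y := by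
  induction h with
  | refl => rfl
  | tail _ h ih => rw [ih, FM_dc hpos h]

theorem dgF_LF (x : List (Tree S ar)) : ∀ k, dgF (LF k x) = min k (dgF x) := by
  induction x with
  | nil => simp [LF, dgF]
  | cons t r ih =>
    obtain ⟨g, c⟩ := t
    intro k
    cases k with
    | zero => simp [LF, dgF]
    | succ k => simp [LF, dgF, ih, dg_L_le]; omega

/-- first adjunction -/
theorem app_le_iff (hpos : ∀ g : S, 0 < ar g) (a b c : List (Tree S ar)) :
    FMs (a ++ b) c ↔ FMs a (LF (dgF a) c) ∧ FMs b (RF (dgF a) c) := by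
  constructor
  · intro h
    have := FMs_LR hpos h (dgF a)
    rwa [(LRF_app a b).1, (LRF_app a b).2] at this
  · rintro ⟨h1, h2⟩
    exact ((FMs.appR h1).trans (FMs.appL h2)).trans (app_le c _)

/-- second adjunction -/
theorem le_und_iff (hpos : ∀ g : S, 0 < ar g) (a b c : List (Tree S ar)) :
    FMs c (und a b) ↔ FMs (LF (dgF a) c) a ∧ FMs (RF (dgF a) c) b := by
  constructor
  · intro h
    have := FMs_LR hpos h (dgF a)
    rwa [(LRF_und a b).1, (LRF_und a b).2] at this
  · rintro ⟨h1, h2⟩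
    have hd := FMs_dg hpos h1
    rw [dgF_LF] at hd
    obtain ⟨y, g1, g2, g3⟩ := liftLFs hpos c _ a h1
    rw [← g3] at h2
    obtain ⟨z, e1, e2, e3⟩ := liftRFs hpos y _ b h2
    have := le_und z (dgF a) (by rw [← FMs_dg hpos e1, ← FMs_dg hpos g1]; omega)
    rw [e2, g2, e3] at this
    exact (g1.trans e1).trans this

end EW

namespace EW

open Relation

variable {S : Type} {ar : S → ℕ}

section finite

theorem SL_finite (A : Set S) (hA : A.Finite) (d : ℕ) : ∀ n : ℕ,
    {x : SL S ar n | dg x ≤ d ∧ ∀ s ∈ dc x, s ∈ A}.Finite := by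
  induction d with
  | zero =>
    intro n
    refine (Set.finite_singleton (lvs n)).subset ?_
    rintro x ⟨h, -⟩
    exact eq_lvs_of_dg x (by omega)
  | succ d ih =>
    intro n
    induction n with
    | zero =>
      refine (Set.finite_singleton (SL.nil)).subset ?_
      rintro x -
      exact SL.eq_nil x
    | succ n ihn =>
      refine ((ihn.image SL.leaf).union (hA.biUnion (fun g _ =>
        Set.Finite.image2 (SL.node g) (ih (ar g)) (ih n)))).subset ?_
      rintro x ⟨h1, h2⟩
      cases x with
      | leaf r => exact Or.inl ⟨r, ⟨h1, h2⟩, rfl⟩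
      | node g c r =>
        right
        simp only [dg, dc, List.mem_cons, List.mem_append] at h1 h2
        refine Set.mem_biUnion (h2 g (Or.inl rfl)) ⟨c, ⟨by omega, ?_⟩, r, ⟨by omega, ?_⟩, rfl⟩
        · exact fun s hs => h2 s (Or.inr (Or.inl hs))
        · exact fun s hs => h2 s (Or.inr (Or.inr hs))

theorem F_finite (A : Set S) (hA : A.Finite) (d : ℕ) :
    {x : List (Tree S ar) | dgF x ≤ d ∧ ∀ s ∈ dcF x, s ∈ A}.Finite := by
  induction d with
  | zero =>
    refine (Set.finite_singleton []).subset ?_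
    rintro x ⟨h, -⟩
    cases x with
    | nil => rfl
    | cons t r => simp [dgF] at h
  | succ d ih =>
    refine ((Set.finite_singleton []).union (hA.biUnion (fun g _ =>
        Set.Finite.image2 (fun c r => (⟨g, c⟩ :: r : List (Tree S ar)))
          (SL_finite A hA d (ar g)) ih))).subset ?_
    rintro x ⟨h1, h2⟩
    cases x with
    | nil => exact Or.inl rfl
    | cons t r =>
      right
      obtain ⟨g, c⟩ := t
      simp only [dgF, dcF, List.mem_cons, List.mem_append] at h1 h2
      refine Set.mem_biUnion (h2 g (Or.inl rfl)) ⟨c, ⟨by omega, ?_⟩, r, ⟨by omega, ?_⟩, rfl⟩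
      · exact fun s hs => h2 s (Or.inr (Or.inl hs))
      · exact fun s hs => h2 s (Or.inr (Or.inr hs))

theorem up_finite (hpos : ∀ g : S, 0 < ar g) (x : List (Tree S ar)) : {y | FMs x y}.Finite := by
  refine (F_finite {s | s ∈ dcF x} (List.finite_toSet _) (dgF x)).subset ?_
  intro y h
  exact ⟨(FMs_dg hpos h).ge, by rw [← FMs_dc hpos h]; exact fun s hs => hs⟩

theorem dn_finite (hpos : ∀ g : S, 0 < ar g) (x : List (Tree S ar)) : {y | FMs y x}.Finite := by
  refine (F_finite {s | s ∈ dcF x} (List.finite_toSet _) (dgF x)).subset ?_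
  intro y h
  exact ⟨(FMs_dg hpos h).le, by rw [← FMs_dc hpos h]; exact fun s hs => hs⟩

end finite

/-- decoding -/
def dec : {n : ℕ} → SL S ar n → Fin n → STerm S ar
  | _, .nil => Fin.elim0
  | _, .leaf r => Fin.cons (α := fun _ => STerm S ar) STerm.leaf (dec r)
  | _, .node g c r => Fin.cons (α := fun _ => STerm S ar) (STerm.node g (dec c)) (dec r)

/-- decoding of a tree -/
def tr (t : Tree S ar) : STerm S ar := STerm.node t.1 (dec t.2)

/-- decoding of a forest -/
def vl (x : List (Tree S ar)) : List (STerm S ar) := x.map tr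

section bridge

theorem dec_inj {n : ℕ} (x : SL S ar n) : ∀ y : SL S ar n, dec x = dec y → x = y := by
  induction x with
  | nil => intro y _; exact (SL.eq_nil y).symm
  | leaf r ih =>
    intro y h
    cases y with
    | leaf r' =>
      simp only [dec] at h
      rw [ih _ (Fin.cons_injective2 h).2]
    | node g c r' =>
      simp only [dec] at h
      have := (Fin.cons_injective2 h).1
      simp at this
  | node g c r ihc ihr =>
    intro y h
    cases y with
    | leaf r' =>
      simp only [dec] at h
      have := (Fin.cons_injective2 h).1
      simp at this
    | node g' c' r' =>
      simp only [dec] at h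
      have h1 := (Fin.cons_injective2 h).1
      rw [ihr _ (Fin.cons_injective2 h).2]
      simp at h1
      obtain ⟨rfl, h1⟩ := h1
      rw [ihc _ (eq_of_heq h1)]

theorem dec_surj_aux {n : ℕ} (c : Fin n → STerm S ar)
    (hc : ∀ i, ∀ (m : ℕ) (r : SL S ar m), ∃ x : SL S ar (m + 1),
      dec x = Fin.cons (α := fun _ => STerm S ar) (c i) (dec r)) :
    ∃ x : SL S ar n, dec x = c := by
  induction n with
  | zero => exact ⟨.nil, funext fun i => i.elim0⟩
  | succ n ih =>
    obtain ⟨r, hr⟩ := ih (fun i => c i.succ) (fun i => hc i.succ)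
    obtain ⟨x, hx⟩ := hc 0 n r
    refine ⟨x, ?_⟩
    rw [hx, hr]
    exact Fin.cons_self_tail c

theorem dec_surj_term (t : STerm S ar) : ∀ (m : ℕ) (r : SL S ar m), ∃ x : SL S ar (m + 1),
      dec x = Fin.cons (α := fun _ => STerm S ar) t (dec r) := by
  induction t with
  | leaf => intro m r; exact ⟨.leaf r, rfl⟩
  | node g c ih =>
    intro m r
    obtain ⟨x, hx⟩ := dec_surj_aux c ih
    exact ⟨.node g x r, by rw [dec, hx]⟩

theorem dec_surj {n : ℕ} (c : Fin n → STerm S ar) : ∃ x : SL S ar n, dec x = c :=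
  dec_surj_aux c fun i => dec_surj_term (c i)

theorem tr_inj : Function.Injective (tr : Tree S ar → STerm S ar) := by
  rintro ⟨g, c⟩ ⟨g', c'⟩ h
  simp [tr] at h
  obtain ⟨rfl, h⟩ := h
  rw [dec_inj _ _ (eq_of_heq h)]

theorem tr_surj (t : STerm S ar) (ht : t ≠ .leaf) : ∃ x : Tree S ar, tr x = t := by
  cases t with
  | leaf => simp at ht
  | node g c =>
    obtain ⟨x, rfl⟩ := dec_surj c
    exact ⟨⟨g, x⟩, rfl⟩

theorem tr_ne (t : Tree S ar) : tr t ≠ .leaf := by simp [tr]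

theorem vl_inj : Function.Injective (vl : List (Tree S ar) → List (STerm S ar)) :=
  List.map_injective_iff.2 tr_inj

theorem dec_gr {n : ℕ} (x : SL S ar n) (h : S) (d : SL S ar (ar h)) :
    dec (gr x h d) = fun i : Fin n =>
      if (i : ℕ) = n - 1 then (dec x i).graftRight (.node h (dec d)) else dec x i := by
  induction x with
  | nil => funext i; exact i.elim0
  | @leaf n r ih =>
    cases n with
    | zero =>
      cases r
      funext i
      refine Fin.cases ?_ (fun i => i.elim0) i
      simp [gr, dec, STerm.graftRight]
    | succ n =>
      funext i
      refine Fin.cases ?_ (fun i => ?_) i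
      · simp [gr, dec]
      · simp [gr, dec, ih]
  | @node n g c r ihc ihr =>
    cases n with
    | zero =>
      cases r
      funext i
      refine Fin.cases ?_ (fun i => i.elim0) i
      simp [gr, dec, STerm.graftRight, ihc]
    | succ n =>
      funext i
      refine Fin.cases ?_ (fun i => ?_) i
      · simp [gr, dec]
      · simp [gr, dec, ihr]

theorem tr_gr (g : S) (c : SL S ar (ar g)) (h : S) (d : SL S ar (ar h)) :
    tr ⟨g, gr c h d⟩ = (tr ⟨g, c⟩).graftRight (tr ⟨h, d⟩) := by
  simp [tr, dec_gr, STerm.graftRight]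

/-- moves of sequences of terms -/
def FnMove {n : ℕ} (c c' : Fin n → STerm S ar) : Prop :=
  (∃ j j' : Fin n, (j' : ℕ) = (j : ℕ) + 1 ∧ c j' ≠ .leaf ∧
    c' = Function.update (Function.update c j ((c j).graftRight (c j'))) j' .leaf) ∨
  ∃ i t', STerm.TermMove (c i) t' ∧ c' = Function.update c i t'

theorem TermMove_iff (g : S) (c : Fin (ar g) → STerm S ar) (t : STerm S ar) :
    STerm.TermMove (.node g c) t ↔ ∃ c', t = .node g c' ∧ FnMove c c' := by
  constructor
  · intro h
    cases h with
    | here _ _ j j' hj hne => exact ⟨_, rfl, Or.inl ⟨j, j', hj, hne, rfl⟩⟩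
    | child _ _ i t' h => exact ⟨_, rfl, Or.inr ⟨i, t', h, rfl⟩⟩
  · rintro ⟨c', rfl, ⟨j, j', hj, hne, rfl⟩ | ⟨i, t', h, rfl⟩⟩
    · exact .here _ _ j j' hj hne
    · exact .child _ _ i t' h

theorem FnMove.cons {n : ℕ} {c c' : Fin n → STerm S ar} (t : STerm S ar) (h : FnMove c c') :
    FnMove (Fin.cons (α := fun _ => STerm S ar) t c) (Fin.cons (α := fun _ => STerm S ar) t c') := by
  rcases h with ⟨j, j', hj, hne, rfl⟩ | ⟨i, t', h, rfl⟩
  · left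
    refine ⟨j.succ, j'.succ, by simp [hj], by simpa using hne, ?_⟩
    rw [Fin.cons_update, Fin.cons_update]
    simp
  · right
    exact ⟨i.succ, t', by simpa using h, by rw [Fin.cons_update]⟩

theorem FnMove.here {n : ℕ} (t t' : STerm S ar) (c : Fin n → STerm S ar) (ht : t' ≠ .leaf) :
    FnMove (Fin.cons (α := fun _ => STerm S ar) t (Fin.cons (α := fun _ => STerm S ar) t' c))
      (Fin.cons (α := fun _ => STerm S ar) (t.graftRight t')
        (Fin.cons (α := fun _ => STerm S ar) .leaf c)) := by
  left
  refine ⟨0, Fin.succ 0, by simp, by simpa using ht, ?_⟩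
  rw [Fin.cons_zero, Fin.cons_succ, Fin.cons_zero, Fin.update_cons_zero, ← Fin.cons_update,
    Fin.update_cons_zero]

theorem SM_FnMove {n : ℕ} {x y : SL S ar n} (h : SM x y) : FnMove (dec x) (dec y) := by
  induction h with
  | @child n g c c' r h ih =>
    right
    refine ⟨0, .node g (dec c'), ?_, ?_⟩
    · simp only [dec, Fin.cons_zero]
      rw [TermMove_iff]
      exact ⟨_, rfl, ih⟩
    · simp only [dec]; rw [Fin.update_cons_zero]
  | nextL h ih => exact ih.cons _
  | nextN h ih => exact ih.cons _
  | swap => exact FnMove.here .leaf _ _ (by simp)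
  | @graft n g h c d r =>
    have := tr_gr g c h d
    simp only [tr] at this
    simp only [dec]
    rw [this]
    exact FnMove.here _ _ _ (by simp)

theorem FnMove_SM {n : ℕ} (x : SL S ar n) : ∀ c', FnMove (dec x) c' → ∃ y, c' = dec y ∧ SM x y := by
  have key : ∀ {n : ℕ} (r : SL S ar n) (t : STerm S ar) (c' : Fin (n + 1) → STerm S ar),
      (∀ c', FnMove (dec r) c' → ∃ y, c' = dec y ∧ SM r y) →
      FnMove (Fin.cons (α := fun _ => STerm S ar) t (dec r)) c' →
      (∃ y, c' = Fin.cons (α := fun _ => STerm S ar) t (dec y) ∧ SM r y) ∨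
      (∃ t', STerm.TermMove t t' ∧ c' = Fin.cons (α := fun _ => STerm S ar) t' (dec r)) ∨
      (∃ (m : ℕ) (hm : n = m + 1) (h : S) (d : SL S ar (ar h)) (r' : SL S ar m),
        hm ▸ r = SL.node h d r' ∧ c' = Fin.cons (α := fun _ => STerm S ar)
          (t.graftRight (tr ⟨h, d⟩)) (hm ▸ dec (SL.leaf r'))) := by
    intro n r t c' ih hm
    rcases hm with ⟨j, j', hj, hne, rfl⟩ | ⟨i, t', h, rfl⟩
    · obtain ⟨j', rfl⟩ : ∃ i, j' = Fin.succ i := Fin.exists_succ_eq.2 (by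
        rintro rfl; simp at hj) |>.imp fun _ h => h.symm
      induction j using Fin.cases with
      | zero =>
        right; right
        cases n with
        | zero => exact j'.elim0
        | succ m =>
          obtain rfl : j' = 0 := by ext; simpa using hj
          cases r with
          | leaf r => simp [dec] at hne
          | node h d r =>
            refine ⟨m, rfl, h, d, r, rfl, ?_⟩
            simp only [dec]
            rw [Fin.cons_zero, Fin.cons_succ, Fin.cons_zero, Fin.update_cons_zero,
              ← Fin.cons_update, Fin.update_cons_zero]
            rfl
      | succ j =>
        left
        obtain ⟨y, h1, h2⟩ := ih _ (Or.inl ⟨j, j', by simpa using hj, by simpa using hne, rfl⟩)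
        refine ⟨y, ?_, h2⟩
        rw [← h1, Fin.cons_update, Fin.cons_update]
        simp
    · induction i using Fin.cases with
      | zero =>
        right; left
        exact ⟨t', by simpa using h, by rw [Fin.update_cons_zero]⟩
      | succ i =>
        left
        obtain ⟨y, h1, h2⟩ := ih _ (Or.inr ⟨i, t', by simpa using h, rfl⟩)
        exact ⟨y, by rw [← h1, Fin.cons_update], h2⟩
  induction x with
  | nil =>
    rintro c' (⟨j, -⟩ | ⟨i, -⟩)
    · exact j.elim0
    · exact i.elim0
  | @leaf n r ih =>
    intro c' hm
    rcases key r .leaf c' ih hm with ⟨y, rfl, h⟩ | ⟨t', h, -⟩ | ⟨m, rfl, h, d, r', hr, rfl⟩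
    · exact ⟨.leaf y, rfl, .nextL h⟩
    · cases h
    · simp at hr
      subst hr
      exact ⟨_, rfl, .swap⟩
  | @node n g c r ihc ihr =>
    intro c' hm
    rcases key r _ c' ihr hm with ⟨y, rfl, h⟩ | ⟨t', h, rfl⟩ | ⟨m, rfl, h, d, r', hr, rfl⟩
    · exact ⟨.node g c y, rfl, .nextN h⟩
    · rw [TermMove_iff] at h
      obtain ⟨c', rfl, h⟩ := h
      obtain ⟨y, rfl, h2⟩ := ihc _ h
      exact ⟨.node g y r, rfl, .child h2⟩
    · simp at hr
      subst hr
      refine ⟨_, ?_, .graft⟩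
      have := tr_gr g c h d
      simp only [tr] at this
      simp only [dec, tr]
      rw [this]

theorem ForestMove.cons {f f' : List (STerm S ar)} (t : STerm S ar) (h : ForestMove f f') :
    ForestMove (t :: f) (t :: f') := by
  cases h with
  | root pre a b post hb => exact ForestMove.root (t :: pre) a b post hb
  | tree pre a b post hb => exact ForestMove.tree (t :: pre) a b post hb

theorem FM_ForestMove {x y : List (Tree S ar)} (h : FM x y) : ForestMove (vl x) (vl y) := by
  induction h with
  | @child g c c' r h =>
    refine ForestMove.tree [] (tr ⟨g, c⟩) (tr ⟨g, c'⟩) (vl r) ?_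
    simp only [tr]
    rw [TermMove_iff]
    exact ⟨_, rfl, SM_FnMove h⟩
  | next _ ih => exact EW.ForestMove.cons _ ih
  | @graft g h c d r =>
    have := ForestMove.root [] (tr ⟨g, c⟩) (tr ⟨h, d⟩) (vl r) (tr_ne _)
    rw [← tr_gr] at this
    exact this

theorem ForestMove_FM (x : List (Tree S ar)) (f : List (STerm S ar)) (h : ForestMove (vl x) f) :
    ∃ y, f = vl y ∧ FM x y := by
  generalize hz : vl x = z at h
  cases h with
  | root pre a b post hb =>
    induction pre generalizing x with
    | nil =>
      simp only [vl, List.nil_append, List.map_eq_cons_iff] at hz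
      obtain ⟨⟨g, c⟩, r, rfl, rfl, ⟨h, d⟩, r, rfl, rfl, rfl⟩ := hz
      exact ⟨⟨g, gr c h d⟩ :: r, by simp [vl, tr_gr], .graft⟩
    | cons t pre ih =>
      simp only [vl, List.cons_append, List.map_eq_cons_iff] at hz
      obtain ⟨t, r, rfl, rfl, hr⟩ := hz
      obtain ⟨y, h1, h2⟩ := ih r hr
      exact ⟨t :: y, by simp [h1, vl], .next h2⟩
  | tree pre a b post hb =>
    induction pre generalizing x with
    | nil =>
      simp only [vl, List.nil_append, List.map_eq_cons_iff] at hz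
      obtain ⟨⟨g, c⟩, r, rfl, rfl, rfl⟩ := hz
      simp only [tr] at hb
      rw [TermMove_iff] at hb
      obtain ⟨c', rfl, hb⟩ := hb
      obtain ⟨y, rfl, hy⟩ := FnMove_SM _ _ hb
      exact ⟨⟨g, y⟩ :: r, by simp [vl, tr], .child hy⟩
    | cons t pre ih =>
      simp only [vl, List.cons_append, List.map_eq_cons_iff] at hz
      obtain ⟨t, r, rfl, rfl, hr⟩ := hz
      obtain ⟨y, h1, h2⟩ := ih r hr
      exact ⟨t :: y, by simp [h1, vl], .next h2⟩

theorem EWLe_iff (x y : List (Tree S ar)) : EWLe (vl x) (vl y) ↔ FMs x y := by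
  constructor
  · intro h
    have : ∀ f, EWLe (vl x) f → ∃ y, f = vl y ∧ FMs x y := by
      intro f h
      induction h with
      | refl => exact ⟨x, rfl, .refl⟩
      | tail _ h ih =>
        obtain ⟨y, rfl, h1⟩ := ih
        obtain ⟨z, rfl, h2⟩ := ForestMove_FM _ _ h
        exact ⟨z, rfl, h1.tail h2⟩
    obtain ⟨z, h1, h2⟩ := this _ h
    rwa [vl_inj h1]
  · intro h
    exact ReflTransGen.lift vl (fun _ _ => FM_ForestMove) _ _ h

end bridge

end EW

namespace EW

variable {S : Type} {ar : S → ℕ}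

/-- number of extremal leaves -/
def ex : {n : ℕ} → SL S ar n → ℕ
  | _, .nil => 0
  | _, .leaf r => if dg r = 0 then ex r + 1 else ex r
  | _, .node _ c r => if dg r = 0 then ex c + ex r else ex r

/-- number of leaves -/
def aa : {n : ℕ} → SL S ar n → ℕ
  | _, .nil => 0
  | _, .leaf r => 1 + aa r
  | _, .node _ c r => aa c + aa r

/-- preorder word -/
def pr : {n : ℕ} → SL S ar n → List (Option S)
  | _, .nil => []
  | _, .leaf r => none :: pr r
  | _, .node g c r => some g :: (pr c ++ pr r)

section under

theorem aa_eq {n : ℕ} (x : SL S ar n) : ∑ i, (dec x i).arity = aa x := by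
  induction x with
  | nil => simp [aa]
  | leaf r ih => simp [aa, dec, Fin.sum_univ_succ, STerm.arity, ih]
  | node g c r ihc ihr => simp [aa, dec, Fin.sum_univ_succ, STerm.arity, ihc, ihr]

theorem pr_eq {n : ℕ} (x : SL S ar n) : (List.ofFn fun i => (dec x i).preo).flatten = pr x := by
  induction x with
  | nil => simp [pr]
  | leaf r ih => simp [pr, dec, STerm.preo, ih]
  | node g c r ihc ihr => simp [pr, dec, STerm.preo, ihc, ihr]

theorem ex_of_dg {n : ℕ} (x : SL S ar n) (h : dg x = 0) : ex x = aa x := by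
  induction x with
  | nil => rfl
  | leaf r ih => simp only [dg] at h; simp [ex, aa, h, ih h, add_comm]
  | node g c r => simp [dg] at h

theorem ex_le {n : ℕ} (x : SL S ar n) : ex x ≤ aa x := by
  induction x with
  | nil => simp [ex]
  | leaf r ih => simp only [ex, aa]; split_ifs <;> omega
  | node g c r ihc ihr => simp only [ex, aa]; split_ifs <;> omega

theorem pr_all {n : ℕ} (x : SL S ar n) : (∀ o ∈ pr x, o.isNone = true) ↔ dg x = 0 := by
  induction x with
  | nil => simp [pr, dg]
  | leaf r ih => simp [pr, dg, ← ih]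
  | node g c r ihc ihr => simp [pr, dg]

theorem pr_len {n : ℕ} (x : SL S ar n) (h : dg x = 0) : (pr x).length = ex x := by
  induction x with
  | nil => rfl
  | leaf r ih => simp only [dg] at h; simp [ex, pr, h, ih h]
  | node g c r => simp [dg] at h

theorem tw_len (l m : List (Option S)) :
    ((l ++ m).takeWhile fun o => o.isNone).length =
      if (∀ o ∈ l, o.isNone = true) then l.length + (m.takeWhile fun o => o.isNone).length
      else (l.takeWhile fun o => o.isNone).length := by
  induction l with
  | nil => simp
  | cons a l ih =>
    cases a with
    | none =>
      simp only [List.cons_append, List.takeWhile_cons, Option.isNone_none, if_true,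
        List.length_cons, ih, List.mem_cons, forall_eq_or_imp, true_and]
      split_ifs <;> omega
    | some a => simp

theorem ex_eq {n : ℕ} (x : SL S ar n) :
    ((pr x).reverse.takeWhile fun o => o.isNone).length = ex x := by
  induction x with
  | nil => simp [pr, ex]
  | leaf r ih =>
    have h := pr_all r
    simp only [pr, List.reverse_cons, tw_len, ex, List.mem_reverse, h, ih, List.length_reverse]
    split_ifs with h0
    · simp [pr_len r h0]
    · rfl
  | node g c r ihc ihr =>
    have h := pr_all r
    have h' := pr_all c
    simp only [pr, List.reverse_cons, List.reverse_append, List.append_assoc, tw_len, ex,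
      List.mem_reverse, h, h', ihr, ihc, List.length_reverse]
    split_ifs with h0 h1
    · simp [pr_len r h0, pr_len c h1, add_comm]
    · simp [pr_len r h0, add_comm]
    · rfl

theorem exC_eq (t : Tree S ar) : (tr t).extremalCount = ex t.2 := by
  simp only [tr, STerm.extremalCount, STerm.preo, pr_eq, List.reverse_cons, tw_len]
  rw [← ex_eq]
  split_ifs with h
  · have e := List.takeWhile_eq_self_iff.2 h
    rw [e]
    simp
  · rfl

theorem ar_eq (t : Tree S ar) : (tr t).arity = aa t.2 := by
  simp only [tr, STerm.arity, aa_eq]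

theorem fl_snd {n : ℕ} (x : SL S ar n) : ∀ b, (fl x b).2 = b.drop (ex x) := by
  induction x with
  | nil => simp [fl, ex]
  | leaf r ih =>
    intro b
    by_cases hr : dg r = 0
    · cases b <;> simp [fl, ex, hr, ih]
    · rw [fl_leaf r hr]
      simp [ex, hr, ih]
  | node g c r ihc ihr =>
    intro b
    by_cases hr : dg r = 0
    · simp [fl, ex, hr, ihc, ihr]
    · simp [fl, ex, hr, ihr]

/-- grafting on slot lists -/
def GG {n : ℕ} (d : Fin n → STerm S ar) (l : List (STerm S ar)) : Fin n → STerm S ar := fun i =>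
  (d i).graftList ((l.drop (∑ j : Fin n, if (j : ℕ) < (i : ℕ) then (d j).arity else 0)).take
    (d i).arity)

theorem GG_cons {n : ℕ} (t : STerm S ar) (d : Fin n → STerm S ar) (l : List (STerm S ar)) :
    GG (Fin.cons (α := fun _ => STerm S ar) t d) l =
      Fin.cons (α := fun _ => STerm S ar) (t.graftList (l.take t.arity)) (GG d (l.drop t.arity)) := by
  funext i
  refine Fin.cases ?_ (fun i => ?_) i
  · simp [GG]
  · simp [GG, Fin.sum_univ_succ]

theorem graft_node (g : S) (c : Fin (ar g) → STerm S ar) (l : List (STerm S ar)) :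
    (STerm.node g c).graftList l = STerm.node g (GG c l) := rfl

theorem GG_fl {n : ℕ} (x : SL S ar n) : ∀ (b : List (Tree S ar)) (l : List (STerm S ar)),
    (∀ p < aa x, l.getD p .leaf = if p < aa x - ex x then .leaf
      else (vl b).getD (p - (aa x - ex x)) .leaf) → GG (dec x) l = dec (fl x b).1 := by
  induction x with
  | nil => intro b l _; funext i; exact i.elim0
  | leaf r ih =>
    intro b l h
    simp only [dec, GG_cons, STerm.arity, STerm.graftList]
    have hle := ex_le r
    have h0 : (l.take 1).headD .leaf = l.getD 0 .leaf := by cases l <;> simp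
    rw [h0, h 0 (by simp [aa])]
    by_cases hr : dg r = 0
    · have he := ex_of_dg r hr
      simp only [aa, ex, hr, if_true, he, add_comm 1, Nat.sub_self, Nat.not_lt_zero, if_false,
        Nat.sub_zero] at h ⊢
      cases b with
      | nil =>
        rw [ih [] (l.drop 1)]
        · simp [fl, dec, fl_nil, vl]
        · intro p hp
          have := h (p + 1) (by omega)
          simpa [vl, List.getD_eq_getElem?_getD, add_comm] using this
      | cons t b =>
        rw [ih b (l.drop 1)]
        · simp [fl, dec, vl, hr, tr]
        · intro p hp
          have := h (p + 1) (by omega)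
          simpa [vl, List.getD_eq_getElem?_getD, add_comm, he] using this
    · rw [fl_leaf r hr, ih b (l.drop 1)]
      · simp only [aa, ex, hr, if_false, dec]
        rw [if_pos (by omega)]
      · intro p hp
        have := h (p + 1) (by simp only [aa]; omega)
        have e : aa (SL.leaf r) - ex (SL.leaf r) = aa r - ex r + 1 := by
          simp only [aa, ex, hr, if_false]; omega
        rw [e] at this
        simpa [vl, List.getD_eq_getElem?_getD, add_comm] using this
  | node g c r ihc ihr =>
    intro b l h
    have hlc := ex_le c
    have hlr := ex_le r
    simp only [dec, GG_cons, STerm.arity, aa_eq, graft_node]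
    by_cases hr : dg r = 0
    · have he := ex_of_dg r hr
      have e : aa (SL.node g c r) - ex (SL.node g c r) = aa c - ex c := by
        simp only [aa, ex, hr, if_true]; omega
      rw [e] at h
      simp only [aa] at h
      rw [ihc b, ihr (b.drop (ex c))]
      · simp [fl, hr, dec, fl_snd]
      · intro p hp
        have := h (aa c + p) (by omega)
        rw [if_neg (by omega), show aa c + p - (aa c - ex c) = ex c + p by omega] at this
        simpa [vl, List.getD_eq_getElem?_getD, he] using this
      · intro p hp
        have := h p (by omega)
        rw [← this]
        simp [List.getD_eq_getElem?_getD, List.getElem?_take, hp]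
    · have e : aa (SL.node g c r) - ex (SL.node g c r) = aa c + (aa r - ex r) := by
        simp only [aa, ex, hr, if_false]; omega
      rw [e] at h
      simp only [aa] at h
      rw [ihc [], ihr b]
      · simp [fl, hr, dec, fl_nil]
      · intro p hp
        have := h (aa c + p) (by omega)
        rw [show aa c + p - (aa c + (aa r - ex r)) = p - (aa r - ex r) by omega] at this
        simpa [vl, List.getD_eq_getElem?_getD] using this
      · intro p hp
        have := h p (by omega)
        rw [if_pos (by omega)] at this
        simp [List.getD_eq_getElem?_getD, List.getElem?_take, hp, vl] at this ⊢
        exact this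

theorem underSub_eq (t : Tree S ar) (b : List (Tree S ar)) :
    underSub (tr t) ((vl b).take (ex t.2)) = tr ⟨t.1, (fl t.2 b).1⟩ := by
  unfold underSub
  rw [exC_eq, ar_eq]
  show (STerm.node t.1 (dec t.2)).graftList _ = _
  rw [graft_node, GG_fl t.2 b]
  · rfl
  · intro p hp
    have := ex_le t.2
    simp only [List.getD_eq_getElem?_getD, List.getElem?_ofFn, hp, dif_pos, Option.getD_some]
    split_ifs with h
    · rfl
    · rw [List.getElem?_take, if_pos (by omega)]

theorem und_app (a : List (Tree S ar)) (t : Tree S ar) (b : List (Tree S ar)) :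
    und (a ++ [t]) b = a ++ und [t] b := by
  induction a with
  | nil => rfl
  | cons s a ih => rw [List.cons_append, und_cons _ _ _ (by simp), ih]; rfl

theorem underP_eq (a b : List (Tree S ar)) : underP (vl a) (vl b) = vl (und a b) := by
  rcases List.eq_nil_or_concat a with rfl | ⟨a, t, rfl⟩
  · rfl
  · have e : vl (a ++ [t]) = vl a ++ [tr t] := by simp [vl]
    rw [List.concat_eq_append, und_app, e]
    unfold underP
    simp only [List.getLast?_append, List.getLast?_singleton, Option.some_or,
      List.dropLast_concat, exC_eq, underSub_eq]
    obtain ⟨g, c⟩ := t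
    simp [vl, und, fl_snd]

end under

/-- decoding of forests into reduced terms -/
def decF (x : List (Tree S ar)) : List (RTerm S ar) := x.map fun t => ⟨tr t, tr_ne t⟩

theorem decF_val (x : List (Tree S ar)) : (decF x).map Subtype.val = vl x := by
  simp [decF, vl]

theorem decF_bij : Function.Bijective (decF : List (Tree S ar) → List (RTerm S ar)) := by
  constructor
  · exact List.map_injective_iff.2 fun a b h => tr_inj (by simpa using h)
  · refine List.map_surjective_iff.2 ?_
    rintro ⟨t, ht⟩
    obtain ⟨x, rfl⟩ := tr_surj t ht
    exact ⟨x, rfl⟩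

theorem rdF_vl (x : List (Tree S ar)) : rdF (vl x) = decF x := by
  induction x with
  | nil => rfl
  | cons t r ih =>
    simp only [vl, decF, List.map_cons, tr, rdF] at ih ⊢
    rw [ih]

end EW

namespace EW

section algebra

open Classical in
theorem alg {P A : Type} [Ring A] (le : P → P → Prop) (hrefl : ∀ a, le a a)
    (htrans : ∀ a b c, le a b → le b c → le a c)
    (hup : ∀ a, {c | le a c}.Finite) (hdn : ∀ a, {c | le c a}.Finite)
    (E F H : P → A) (app und : P → P → P) (d : P → ℕ) (L R : ℕ → P → P)
    (hinj : Function.Injective E)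
    (hE : ∀ a b, E (app a b) = E a * E b)
    (hF : ∀ f, E f = ∑ᶠ c ∈ {c | le f c}, F c)
    (hH : ∀ f, H f = ∑ᶠ c ∈ {c | le c f}, F c)
    (hd : ∀ a b, le a b → d a = d b)
    (happ : ∀ a b c, le (app a b) c ↔ le a (L (d a) c) ∧ le b (R (d a) c))
    (hund : ∀ a b c, le c (und a b) ↔ le (L (d a) c) a ∧ le (R (d a) c) b) (a b : P) :
    H a * H b = H (und a b) := by
  have hanti : ∀ a b, le a b → le b a → a = b := by
    intro a b h1 h2
    apply hinj
    rw [hF, hF]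
    congr 1
    funext c
    have : le a c ↔ le b c := ⟨fun h => htrans _ _ _ h2 h, fun h => htrans _ _ _ h1 h⟩
    simp only [Set.mem_ofPred_eq, this]
  obtain ⟨up, hup⟩ : ∃ up : P → Finset P, ∀ a c, c ∈ up a ↔ le a c :=
    ⟨fun a => (hup a).toFinset, by simp⟩
  obtain ⟨dn, hdn⟩ : ∃ dn : P → Finset P, ∀ a c, c ∈ dn a ↔ le c a :=
    ⟨fun a => (hdn a).toFinset, by simp⟩
  have hF : ∀ f, E f = ∑ c ∈ up f, F c := by
    intro f
    rw [hF, ← finsum_mem_coe_finset]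
    congr 1
    funext c
    simp [hup]
  have hH : ∀ f, H f = ∑ c ∈ dn f, F c := by
    intro f
    rw [hH, ← finsum_mem_coe_finset]
    congr 1
    funext c
    simp [hdn]
  have key : ∀ N, ∀ a b, (up a).card + (up b).card ≤ N →
      F a * F b = ∑ c ∈ up (app a b) with (L (d a) c, R (d a) c) = (a, b), F c := by
    intro N
    induction N with
    | zero =>
      intro a b h
      have : 0 < (up a).card := Finset.card_pos.2 ⟨a, (hup _ _).2 (hrefl a)⟩
      omega
    | succ N ih =>
      intro a b h
      have h1 := hE a b
      rw [hF (app a b), hF a, hF b, Finset.sum_mul_sum, ← Finset.sum_product',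
        ← Finset.sum_fiberwise_of_maps_to (t := up a ×ˢ up b)
          (g := fun c => (L (d a) c, R (d a) c))] at h1
      swap
      · intro c hc
        simpa [hup, happ] using hc
      have hmem : (a, b) ∈ up a ×ˢ up b := by simp [hup, hrefl]
      rw [← Finset.add_sum_erase _ _ hmem, ← Finset.add_sum_erase (up a ×ˢ up b)
        (fun x => F x.1 * F x.2) hmem] at h1
      rw [Finset.sum_congr (s₂ := (up a ×ˢ up b).erase (a, b)) rfl
        (g := fun x => F x.1 * F x.2)] at h1
      · exact (add_right_cancel h1).symm
      · rintro ⟨a', b'⟩ hp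
        simp only [Finset.mem_erase, Finset.mem_product, hup, ne_eq, Prod.mk.injEq] at hp
        obtain ⟨hne, ha, hb⟩ := hp
        have s1 : up a' ⊆ up a := fun c hc => by
          rw [hup] at hc ⊢; exact htrans _ _ _ ha hc
        have s2 : up b' ⊆ up b := fun c hc => by
          rw [hup] at hc ⊢; exact htrans _ _ _ hb hc
        have c1 := Finset.card_le_card s1
        have c2 := Finset.card_le_card s2
        have hlt : (up a').card + (up b').card ≤ N := by
          by_contra hcon
          apply hne
          have e1 := Finset.eq_of_subset_of_card_le s1 (by omega)
          have e2 := Finset.eq_of_subset_of_card_le s2 (by omega)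
          constructor
          · refine hanti _ _ ?_ ha
            rw [← hup, e1, hup]; exact hrefl a
          · refine hanti _ _ ?_ hb
            rw [← hup, e2, hup]; exact hrefl b
        rw [ih a' b' hlt, ← hd a a' ha]
        refine Finset.sum_congr ?_ fun _ _ => rfl
        ext c
        simp only [Finset.mem_filter, hup, happ, Prod.mk.injEq, ← hd a a' ha]
        constructor
        · rintro ⟨-, rfl, rfl⟩
          exact ⟨⟨hrefl _, hrefl _⟩, rfl, rfl⟩
        · rintro ⟨-, rfl, rfl⟩
          exact ⟨⟨ha, hb⟩, rfl, rfl⟩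
  rw [hH (und a b), hH a, hH b, Finset.sum_mul_sum, ← Finset.sum_product',
        ← Finset.sum_fiberwise_of_maps_to (s := dn (und a b)) (t := dn a ×ˢ dn b)
          (g := fun c => (L (d a) c, R (d a) c))]
  · refine Finset.sum_congr rfl ?_
    rintro ⟨a', b'⟩ hp
    simp only [Finset.mem_product, hdn] at hp
    obtain ⟨ha, hb⟩ := hp
    rw [key _ a' b' le_rfl, hd a' a ha]
    refine Finset.sum_congr ?_ fun _ _ => rfl
    ext c
    simp only [Finset.mem_filter, hup, hdn, happ, hund, Prod.mk.injEq, hd a' a ha]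
    constructor
    · rintro ⟨-, rfl, rfl⟩
      exact ⟨⟨ha, hb⟩, rfl, rfl⟩
    · rintro ⟨-, rfl, rfl⟩
      exact ⟨⟨hrefl _, hrefl _⟩, rfl, rfl⟩
  · intro c hc
    simpa [hdn, hund] using hc

end algebra

end EW
/-- product rule for the homogeneous basis `H`: `H_{f'} · H_{f''} = H_{f' △ f''}`.
Here `F` is characterized (by Möbius inversion for the easterly wind order, whose upper sets
are finite) by `E_f = Σ_{f ≼ f'} F_{f'}`, and `H_f := Σ_{f' ≼ f} F_{f'}`. -/
theorem Hbasis_product {S : Type} {ar : S → ℕ} (hpos : ∀ g : S, 0 < ar g)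
    (𝕂 : Type) [Field 𝕂] [CharZero 𝕂]
    (F H : List (RTerm S ar) → NAlg 𝕂 S ar)
    (hF : ∀ f : List (RTerm S ar),
      EBasis 𝕂 f =
        ∑ᶠ f' ∈ {f' : List (RTerm S ar) |
            EWLe (f.map Subtype.val) (f'.map Subtype.val)}, F f')
    (hH : ∀ f : List (RTerm S ar),
      H f =
        ∑ᶠ f' ∈ {f' : List (RTerm S ar) |
            EWLe (f'.map Subtype.val) (f.map Subtype.val)}, F f')
    (f' f'' : List (RTerm S ar)) :
    H f' * H f'' = H (rdF (underP (f'.map Subtype.val) (f''.map Subtype.val))) := by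
  obtain ⟨a, rfl⟩ := EW.decF_bij.2 f'
  obtain ⟨b, rfl⟩ := EW.decF_bij.2 f''
  rw [EW.decF_val, EW.decF_val, EW.underP_eq, EW.rdF_vl]
  have reidx : ∀ p : List (RTerm S ar) → Prop,
      ∑ᶠ f ∈ {f | p f}, F f = ∑ᶠ c ∈ {c | p (EW.decF c)}, F (EW.decF c) := by
    intro p
    exact (finsum_comp (g := fun f => ∑ᶠ (_ : p f), F f) _ EW.decF_bij).symm
  refine EW.alg (fun x y => EW.FMs x y) (fun _ => Relation.ReflTransGen.refl)
    (fun _ _ _ => Relation.ReflTransGen.trans) (EW.up_finite hpos) (EW.dn_finite hpos)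
    (fun x => EBasis 𝕂 (EW.decF x)) (fun x => F (EW.decF x)) (fun x => H (EW.decF x))
    (fun x y => x ++ y) EW.und EW.dgF EW.LF EW.RF ?_ ?_ ?_ ?_ ?_ ?_ ?_ a b
  · intro x y h
    apply EW.decF_bij.1
    have := MonoidAlgebra.of_injective h
    simpa using this
  · intro x y
    simp [EBasis, EW.decF, MonoidAlgebra.single_mul_single]
  · intro f
    rw [hF, reidx]
    simp only [EW.decF_val, EW.EWLe_iff]
  · intro f
    rw [hH, reidx]
    simp only [EW.decF_val, EW.EWLe_iff]
  · intro x y h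
    exact (EW.FMs_dg hpos h)
  · exact EW.app_le_iff hpos
  · exact EW.le_und_iff hpos
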